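/- arXiv:1307.6540 — 4 statements merged into one kernel-verified Lean document; each statement's English description precedes it below -/
import Mathlib

section
/- Let d = 3 and c(x,y) = 1/|x−y| (the Coulomb cost). Let μ be a Borel probability measure on ℝ³ with ∫∫ dμ(x) dμ(y)/|x−y| < ∞. Then the independent product measure γ₀ = μ^⊗∞ on (ℝ³)^ℕ is the unique minimizer of C_∞ over all γ ∈ P_sym^∞(ℝ³) with γ ↦ μ, and F_∞^OT[μ] = ∫∫ dμ(x) dμ(y)/|x−y|. -/
open MeasureTheory ENNReal Filter Topology ProbabilityTheory

noncomputable section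

/-- `ℝ^d` with the Euclidean norm. -/
abbrev Ed (d : ℕ) := EuclideanSpace ℝ (Fin d)

/-- A Borel probability measure on the countable product `(ℝ^d)^ℕ` is *exchangeable*
(symmetric) if it is invariant under every finite permutation of the coordinates. -/
def IsExchangeable {d : ℕ} (γ : Measure (ℕ → Ed d)) : Prop :=
  ∀ σ : Equiv.Perm ℕ, {n : ℕ | σ n ≠ n}.Finite →
    γ.map (fun x n => x (σ n)) = γ

/-- `γ ↦ μ` : the pushforward of `γ` under every coordinate projection is `μ`. -/
def HasMarginal {d : ℕ} (γ : Measure (ℕ → Ed d)) (μ : Measure (Ed d)) : Prop :=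
  ∀ n : ℕ, γ.map (fun x => x n) = μ

/-- The infinite-body cost `C_∞[γ] = ∫ c(x₁,x₂) dγ`. -/
def Cinf {d : ℕ} (c : Ed d → Ed d → ℝ≥0∞) (γ : Measure (ℕ → Ed d)) : ℝ≥0∞ :=
  ∫⁻ x, c (x 0) (x 1) ∂γ

/-- The optimal cost of the infinite-body optimal transport problem,
`F_∞^OT[μ] = inf { C_∞[γ] : γ ∈ P_sym^∞(ℝ^d), γ ↦ μ }`. -/
def FinfOT {d : ℕ} (c : Ed d → Ed d → ℝ≥0∞) (μ : Measure (Ed d)) : ℝ≥0∞ :=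
  ⨅ (γ : Measure (ℕ → Ed d)) (_ : IsProbabilityMeasure γ) (_ : IsExchangeable γ)
    (_ : HasMarginal γ μ), Cinf c γ

/-- `γ` is the infinite product measure `μ^⊗∞` on `(ℝ^d)^ℕ`, characterized by its
finite-dimensional marginals being the finite products `μ^⊗n`. -/
def IsInfiniteProduct {d : ℕ} (γ : Measure (ℕ → Ed d)) (μ : Measure (Ed d)) : Prop :=
  ∀ n : ℕ, γ.map (fun x (i : Fin n) => x i.val) = Measure.pi (fun _ : Fin n => μ)

/-- The Coulomb cost `1/|x-y|` with values in `[0,∞]` (equal to `∞` on the diagonal). -/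
def coulomb {d : ℕ} (x y : Ed d) : ℝ≥0∞ := (ENNReal.ofReal (dist x y))⁻¹


def gk (p : ℝ × Ed 3) (x : Ed 3) : ℝ := Real.exp (-(2 * p.1 ^ 2) * ‖x - p.2‖ ^ 2)

def gW (s : ℝ) : ℝ≥0∞ :=
  ENNReal.ofReal ((√Real.pi)⁻¹ * ((Real.pi / (4 * s ^ 2)) ^ (3 / 2 : ℝ))⁻¹)

lemma gk_pos (p : ℝ × Ed 3) (x : Ed 3) : 0 < gk p x := Real.exp_pos _

lemma gk_le_one (p : ℝ × Ed 3) (x : Ed 3) : gk p x ≤ 1 := by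
  unfold gk
  rw [Real.exp_le_one_iff]
  have : 0 ≤ (2 * p.1 ^ 2) * ‖x - p.2‖ ^ 2 := by positivity
  linarith

lemma gk_measurable : Measurable (fun q : (ℝ × Ed 3) × Ed 3 => gk q.1 q.2) := by
  unfold gk
  fun_prop

lemma gk_measurable' (p : ℝ × Ed 3) : Measurable (gk p) := by
  unfold gk
  fun_prop

lemma gW_measurable : Measurable gW := by
  unfold gW
  fun_prop

lemma gW_pos {s : ℝ} (hs : s ≠ 0) : gW s ≠ 0 := by
  unfold gW
  have : 0 < s ^ 2 := by positivity
  have := Real.pi_pos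
  simp only [ne_eq, ENNReal.ofReal_eq_zero, not_le]
  positivity

lemma gauss_integrable {b : ℝ} (hb : 0 < b) :
    Integrable (fun v : Ed 3 => Real.exp (-b * ‖v‖ ^ 2)) := by
  have h := GaussianFourier.integral_rexp_neg_mul_sq_norm (V := Ed 3) hb
  apply Integrable.of_integral_ne_zero
  rw [h]
  have := Real.pi_pos
  positivity

lemma gauss_lint {b : ℝ} (hb : 0 < b) :
    ∫⁻ v : Ed 3, ENNReal.ofReal (Real.exp (-b * ‖v‖ ^ 2))
      = ENNReal.ofReal ((Real.pi / b) ^ (3 / 2 : ℝ)) := by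
  have h := GaussianFourier.integral_rexp_neg_mul_sq_norm (V := Ed 3) hb
  rw [← ofReal_integral_eq_lintegral_ofReal (gauss_integrable hb)
    (ae_of_all _ fun v => (Real.exp_pos _).le), h]
  simp

lemma gk_mul (s : ℝ) (z x y : Ed 3) :
    gk (s, z) x * gk (s, z) y =
      Real.exp (-(s ^ 2) * ‖x - y‖ ^ 2) *
        Real.exp (-(4 * s ^ 2) * ‖z - (1 / 2 : ℝ) • (x + y)‖ ^ 2) := by
  unfold gk
  rw [← Real.exp_add, ← Real.exp_add]
  congr 1
  have h := parallelogram_law_with_norm ℝ (x - z) (y - z)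
  have e1 : (x - z) - (y - z) = x - y := by abel
  have e2 : ‖(x - z) + (y - z)‖ = 2 * ‖z - (1 / 2 : ℝ) • (x + y)‖ := by
    have : (x - z) + (y - z) = (-2 : ℝ) • (z - (1 / 2 : ℝ) • (x + y)) := by
      module
    rw [this, norm_smul]; norm_num
  rw [e1, e2] at h
  simp only
  linear_combination (s^2) * h

lemma line_gauss (D : ℝ) (hD : 0 ≤ D) :
    ∫⁻ s : ℝ, ENNReal.ofReal ((√Real.pi)⁻¹) * ENNReal.ofReal (Real.exp (-(s ^ 2) * D ^ 2))
      = (ENNReal.ofReal D)⁻¹ := by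
  have hpi := Real.pi_pos
  rcases hD.eq_or_lt with rfl | hD
  · have : (0:ℝ) < (√Real.pi)⁻¹ := by positivity
    simp
    exact ENNReal.mul_top (by simpa using Real.pi_pos)
  · rw [lintegral_const_mul _ (by fun_prop)]
    have hb : 0 < D ^ 2 := by positivity
    have h := integral_gaussian (D ^ 2)
    have e : (fun s : ℝ => Real.exp (-(s ^ 2) * D ^ 2)) = fun s => Real.exp (-(D ^ 2) * s ^ 2) := by
      ext s; ring_nf
    rw [← ofReal_integral_eq_lintegral_ofReal
      (by rw [e]; exact integrable_exp_neg_mul_sq hb)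
      (ae_of_all _ fun v => (Real.exp_pos _).le), e, h, ← ENNReal.ofReal_mul (by positivity),
      ← ENNReal.ofReal_inv_of_pos hD]
    congr 1
    rw [Real.sqrt_div hpi.le, Real.sqrt_sq hD.le]
    field_simp

def gF (p : ℝ × Ed 3) (x : Ed 3) : ℝ≥0∞ := ENNReal.ofReal (gk p x)

lemma gF_measurable : Measurable (fun q : (ℝ × Ed 3) × Ed 3 => gF q.1 q.2) :=
  gk_measurable.ennreal_ofReal

lemma gF_measurable' (p : ℝ × Ed 3) : Measurable (gF p) := by
  unfold gF gk
  fun_prop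

lemma gF_meas_left (x : Ed 3) : Measurable (fun p => gF p x) := by
  unfold gF gk
  fun_prop

lemma coulomb_eq (x y : Ed 3) :
    coulomb x y = ∫⁻ p : ℝ × Ed 3, gW p.1 * (gF p x * gF p y) := by
  have hm : Measurable (fun p : ℝ × Ed 3 => gW p.1 * (gF p x * gF p y)) :=
    (gW_measurable.comp measurable_fst).mul ((gF_meas_left x).mul (gF_meas_left y))
  rw [Measure.volume_eq_prod, lintegral_prod _ hm.aemeasurable]
  unfold coulomb
  rw [← line_gauss _ dist_nonneg]
  apply lintegral_congr_ae
  have h0 : ∀ᵐ s : ℝ, s ≠ 0 := by simp [ae_iff]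
  filter_upwards [h0] with s hs
  have hs2 : 0 < 4 * s ^ 2 := by positivity
  have hpi := Real.pi_pos
  have e : ∀ z : Ed 3, gW s * (gF (s, z) x * gF (s, z) y) =
      (gW s * ENNReal.ofReal (Real.exp (-(s ^ 2) * ‖x - y‖ ^ 2))) *
        ENNReal.ofReal (Real.exp (-(4 * s ^ 2) * ‖z - (1 / 2 : ℝ) • (x + y)‖ ^ 2)) := by
    intro z
    unfold gF
    rw [← ENNReal.ofReal_mul (gk_pos _ _).le, gk_mul, ENNReal.ofReal_mul (Real.exp_pos _).le,
      mul_assoc]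
  simp only [e]
  rw [lintegral_const_mul _ (by fun_prop),
    lintegral_sub_right_eq_self
      (fun z : Ed 3 => ENNReal.ofReal (Real.exp (-(4 * s ^ 2) * ‖z‖ ^ 2))) _,
    gauss_lint hs2, mul_right_comm]
  unfold gW
  rw [← ENNReal.ofReal_mul (p := (√Real.pi)⁻¹ * ((Real.pi / (4 * s ^ 2)) ^ (3 / 2 : ℝ))⁻¹)
    (by positivity), dist_eq_norm]
  congr 2
  rw [mul_assoc, inv_mul_cancel₀ (by positivity), mul_one]

/-- Gaussian convolution determines a finite measure. -/
lemma ext_of_gauss {s : ℝ} (hs : s ≠ 0) (α β : Measure (Ed 3)) [IsFiniteMeasure α]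
    [IsFiniteMeasure β]
    (h : ∀ᵐ z : Ed 3, ∫⁻ x, gF (s, z) x ∂α = ∫⁻ x, gF (s, z) x ∂β) : α = β := by
  have hb : 0 < 2 * s ^ 2 := by positivity
  set g : Ed 3 → ℝ := fun v => Real.exp (-(2 * s ^ 2) * ‖v‖ ^ 2) with hg
  have hgm : Measurable g := by rw [hg]; fun_prop
  set G : Measure (Ed 3) := volume.withDensity (fun v => ENNReal.ofReal (g v)) with hG
  have hGf : IsFiniteMeasure G := by
    apply isFiniteMeasure_withDensity_ofReal
    exact (gauss_integrable hb).2
  have key : ∀ (ν : Measure (Ed 3)) [IsFiniteMeasure ν] (S : Set (Ed 3)), MeasurableSet S →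
      (ν ∗ G) S = ∫⁻ z, S.indicator 1 z * ∫⁻ x, gF (s, z) x ∂ν := by
    intro ν _ S hS
    have hi : Measurable (S.indicator (1 : Ed 3 → ℝ≥0∞)) := measurable_one.indicator hS
    rw [← lintegral_indicator_one hS, Measure.lintegral_conv hi]
    have : ∀ x : Ed 3, ∫⁻ y, S.indicator (1 : Ed 3 → ℝ≥0∞) (x + y) ∂G =
        ∫⁻ z, S.indicator 1 z * gF (s, z) x := by
      intro x
      rw [hG, lintegral_withDensity_eq_lintegral_mul _ hgm.ennreal_ofReal (by fun_prop)]
      conv_rhs => rw [← lintegral_add_left_eq_self _ x]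
      apply lintegral_congr
      intro y
      simp only [Pi.mul_apply]
      rw [mul_comm]
      congr 1
      simp only [gF, gk, hg]
      rw [show x - (x + y) = -y by abel, norm_neg]
    simp only [this]
    rw [lintegral_lintegral_swap]
    · apply lintegral_congr
      intro z
      rw [lintegral_const_mul _ (gF_measurable' _)]
    · apply Measurable.aemeasurable
      unfold gF gk
      fun_prop
  have hconv : α ∗ G = β ∗ G := by
    ext S hS
    rw [key α S hS, key β S hS]
    apply lintegral_congr_ae
    filter_upwards [h] with z hz
    rw [hz]
  apply Measure.ext_of_charFun
  ext t
  have h1 := congrArg (fun m => charFun m t) hconv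
  simp only [charFun_conv] at h1
  refine mul_right_cancel₀ ?_ h1
  have h2 := GaussianFourier.integral_cexp_neg_mul_sq_norm_add (V := Ed 3)
    (b := ((2 * s ^ 2 : ℝ) : ℂ)) (by rw [Complex.ofReal_re]; exact hb) Complex.I t
  have h3 : charFun G t = ∫ v : Ed 3, Complex.exp (-((2 * s ^ 2 : ℝ) : ℂ) * ‖v‖ ^ 2 + Complex.I * inner ℝ t v) := by
    rw [charFun_apply, hG, integral_withDensity_eq_integral_toReal_smul hgm.ennreal_ofReal (by simp)]
    congr 1
    ext v
    rw [ENNReal.toReal_ofReal (Real.exp_pos _).le, Complex.real_smul, Complex.exp_add, real_inner_comm]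
    push_cast
    ring_nf
  rw [h3, h2]
  have hpi := Real.pi_ne_zero
  refine mul_ne_zero ?_ (Complex.exp_ne_zero _)
  rw [Ne, Complex.cpow_eq_zero_iff]
  rintro ⟨h, -⟩
  simp [hs] at h

lemma moment {Ω : Type*} [MeasurableSpace Ω] (P : Measure Ω) [IsProbabilityMeasure P]
    (Y : ℕ → Ω → ℝ) (hY : ∀ i, Measurable (Y i)) (hY1 : ∀ i ω, |Y i ω| ≤ 1)
    (g : Ω → ℝ) (hg : Measurable g) (hg1 : ∀ ω, |g ω| ≤ 1) (v ρ a : ℝ)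
    (hv : ∀ i, ∫ ω, Y i ω * Y i ω ∂P = v)
    (hρ : ∀ i j, i ≠ j → ∫ ω, Y i ω * Y j ω ∂P = ρ)
    (ha : ∀ i, ∫ ω, g ω * Y i ω ∂P = a) (n : ℕ) (t : ℝ) :
    0 ≤ t ^ 2 + 2 * t * n * a + n * v + n * (n - 1) * ρ := by
  have hint : ∀ (f h : Ω → ℝ), Measurable f → Measurable h → (∀ ω, |f ω| ≤ 1) →
      (∀ ω, |h ω| ≤ 1) → Integrable (fun ω => f ω * h ω) P := by
    intro f h hf hh hf1 hh1
    refine Integrable.of_bound (hf.mul hh).aestronglyMeasurable 1 (ae_of_all _ fun ω => ?_)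
    rw [Real.norm_eq_abs, abs_mul]
    exact mul_le_one₀ (hf1 ω) (abs_nonneg _) (hh1 ω)
  have e : ∀ ω, (t * g ω + ∑ i ∈ Finset.range n, Y i ω) ^ 2 =
      t ^ 2 * (g ω * g ω) + (2 * t) * (∑ i ∈ Finset.range n, g ω * Y i ω) +
        ∑ i ∈ Finset.range n, ∑ j ∈ Finset.range n, Y i ω * Y j ω := by
    intro ω
    rw [← Finset.mul_sum, ← Finset.sum_mul_sum]
    ring
  have h0 : 0 ≤ ∫ ω, (t * g ω + ∑ i ∈ Finset.range n, Y i ω) ^ 2 ∂P :=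
    integral_nonneg fun ω => sq_nonneg _
  simp only [e] at h0
  have i1 : Integrable (fun ω => t ^ 2 * (g ω * g ω)) P := (hint g g hg hg hg1 hg1).const_mul _
  have i2 : Integrable (fun ω => ∑ i ∈ Finset.range n, g ω * Y i ω) P :=
    integrable_finsetSum _ fun i _ => hint _ _ hg (hY i) hg1 (hY1 i)
  have i3 : ∀ i, Integrable (fun ω => ∑ j ∈ Finset.range n, Y i ω * Y j ω) P := fun i =>
    integrable_finsetSum _ fun j _ => hint _ _ (hY i) (hY j) (hY1 i) (hY1 j)
  have i4 : Integrable (fun ω => ∑ i ∈ Finset.range n, ∑ j ∈ Finset.range n, Y i ω * Y j ω) P :=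
    integrable_finsetSum _ fun i _ => i3 i
  have i5 : Integrable (fun ω => t ^ 2 * (g ω * g ω) +
      (2 * t) * (∑ i ∈ Finset.range n, g ω * Y i ω)) P := i1.add (i2.const_mul _)
  rw [integral_add i5 i4, integral_add i1 (i2.const_mul _),
    integral_const_mul, integral_const_mul,
    integral_finsetSum _ (fun i _ => hint _ _ hg (hY i) hg1 (hY1 i)),
    integral_finsetSum _ (fun i _ => i3 i)] at h0
  simp only [ha] at h0
  have hs : ∀ i ∈ Finset.range n, ∫ ω, ∑ j ∈ Finset.range n, Y i ω * Y j ω ∂P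
      = v + (n - 1) * ρ := by
    intro i hi
    rw [integral_finsetSum _ (fun j _ => hint _ _ (hY i) (hY j) (hY1 i) (hY1 j)),
      ← Finset.add_sum_erase _ _ hi, hv i]
    congr 1
    rw [Finset.sum_congr rfl (fun j hj => hρ i j (Finset.ne_of_mem_erase hj).symm)]
    have hn : 1 ≤ n := by have := Finset.mem_range.1 hi; omega
    simp [Finset.card_erase_of_mem hi, Nat.cast_sub hn]
  rw [Finset.sum_congr rfl hs] at h0
  simp only [Finset.sum_const, Finset.card_range, nsmul_eq_mul] at h0
  have hg2 : ∫ ω, g ω * g ω ∂P ≤ 1 := by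
    calc ∫ ω, g ω * g ω ∂P ≤ ∫ ω, (1 : ℝ) ∂P :=
          integral_mono (hint g g hg hg hg1 hg1) (integrable_const _) (fun ω => by
            have := abs_le.1 (hg1 ω)
            show g ω * g ω ≤ 1
            nlinarith)
      _ = 1 := by simp
  have ht : t ^ 2 * ∫ ω, g ω * g ω ∂P ≤ t ^ 2 := by nlinarith [sq_nonneg t]
  linarith

lemma moment_concl (v ρ a : ℝ)
    (h : ∀ (n : ℕ) (t : ℝ), 0 ≤ t ^ 2 + 2 * t * n * a + n * v + n * (n - 1) * ρ) :
    0 ≤ ρ ∧ (ρ = 0 → a = 0) := by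
  constructor
  · by_contra hρ
    push Not at hρ
    obtain ⟨n, hn⟩ := exists_nat_gt (v / (-ρ))
    rw [div_lt_iff₀ (by linarith)] at hn
    have := h (n + 1) 0
    push_cast at this
    have h1 : (0 : ℝ) ≤ n := Nat.cast_nonneg n
    nlinarith
  · rintro rfl
    by_contra ha
    have ha2 : 0 < a ^ 2 := by positivity
    obtain ⟨n, hn⟩ := exists_nat_gt (v / a ^ 2)
    rw [div_lt_iff₀ ha2] at hn
    have hv := h 1 0
    have := h n (-(n * a))
    simp at hv
    have h1 : (0 : ℝ) ≤ n := Nat.cast_nonneg n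
    have h2 : (0 : ℝ) ≤ n * (v - n * a ^ 2) := by nlinarith
    rcases h1.eq_or_lt with h3 | h3
    · rw [← h3] at hn; linarith
    · nlinarith

lemma swap_fin (i j : ℕ) : {n : ℕ | Equiv.swap i j n ≠ n}.Finite := by
  apply Set.Finite.subset (Set.toFinite {i, j})
  intro n hn
  by_contra h
  simp only [Set.mem_insert_iff, Set.mem_singleton_iff, not_or] at h
  exact hn (Equiv.swap_apply_of_ne_of_ne h.1 h.2)

lemma exch_integral {γ : Measure (ℕ → Ed 3)} (hγ : IsExchangeable γ) (i j : ℕ)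
    (H : (ℕ → Ed 3) → ℝ) (hH : Measurable H) :
    ∫ x, H (fun n => x (Equiv.swap i j n)) ∂γ = ∫ x, H x ∂γ := by
  have hm : Measurable (fun (x : ℕ → Ed 3) n => x (Equiv.swap i j n)) :=
    measurable_pi_lambda _ fun n => measurable_pi_apply _
  conv_rhs => rw [← hγ (Equiv.swap i j) (swap_fin i j)]
  rw [integral_map hm.aemeasurable hH.aestronglyMeasurable]

lemma exch_pair {γ : Measure (ℕ → Ed 3)} (hγ : IsExchangeable γ) (i j : ℕ) (hij : i ≠ j)
    (f : Ed 3 → ℝ) (hf : Measurable f) :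
    ∫ x, f (x i) * f (x j) ∂γ = ∫ x, f (x 0) * f (x 1) ∂γ := by
  have hj' : Equiv.swap 0 i j ≠ 0 := by
    intro h
    have := congrArg (Equiv.swap 0 i) h
    simp at this
    exact hij this.symm
  have e1 := exch_integral hγ 0 i (fun x => f (x 0) * f (x (Equiv.swap 0 i j))) (by fun_prop)
  have e2 := exch_integral hγ 1 (Equiv.swap 0 i j) (fun x => f (x 0) * f (x 1)) (by fun_prop)
  simp only [Equiv.swap_apply_left, Equiv.swap_apply_self] at e1
  rw [e1, ← e2]
  simp only [Equiv.swap_apply_left]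
  rw [Equiv.swap_apply_of_ne_of_ne (by norm_num) hj'.symm]

lemma marg_integral {γ : Measure (ℕ → Ed 3)} {μ : Measure (Ed 3)} (hμ : HasMarginal γ μ) (i : ℕ)
    (f : Ed 3 → ℝ) (hf : Measurable f) : ∫ x, f (x i) ∂γ = ∫ x, f x ∂μ := by
  rw [← hμ i, integral_map (measurable_pi_apply i).aemeasurable hf.aestronglyMeasurable]

lemma exch_core {γ : Measure (ℕ → Ed 3)} [IsProbabilityMeasure γ] {μ : Measure (Ed 3)}
    [IsProbabilityMeasure μ]
    (hγ : IsExchangeable γ) (hμ : HasMarginal γ μ)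
    (f : Ed 3 → ℝ) (hf : Measurable f) (hf0 : ∀ x, 0 ≤ f x) (hf1 : ∀ x, f x ≤ 1)
    (s : Finset ℕ) (T : ℕ → Set (Ed 3)) (hT : ∀ i, MeasurableSet (T i)) (k : ℕ) (hk : k ∉ s) :
    (∫ x, f x ∂μ) * (∫ x, f x ∂μ) ≤ ∫ x, f (x 0) * f (x 1) ∂γ ∧
    (∫ x, f (x 0) * f (x 1) ∂γ = (∫ x, f x ∂μ) * (∫ x, f x ∂μ) →
      ∫ x in Set.pi s T, f (x k) ∂γ = γ.real (Set.pi s T) * ∫ x, f x ∂μ) := by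
  set m := ∫ x, f x ∂μ with hm
  have hfi : Integrable f μ := Integrable.of_bound hf.aestronglyMeasurable 1
    (ae_of_all _ fun x => by rw [Real.norm_eq_abs, abs_le]; constructor <;> linarith [hf0 x, hf1 x])
  have hm0 : 0 ≤ m := integral_nonneg hf0
  have hm1 : m ≤ 1 := by
    calc m ≤ ∫ x, (1 : ℝ) ∂μ := integral_mono hfi (integrable_const _) hf1
      _ = 1 := by simp
  set A : Set (ℕ → Ed 3) := Set.pi s T with hA
  have hAm : MeasurableSet A := MeasurableSet.pi s.countable_toSet fun i _ => hT i
  obtain ⟨N, hN⟩ : ∃ N, ∀ i ∈ s, i < N := ⟨s.sup id + 1, fun i hi =>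
    Nat.lt_succ_of_le (Finset.le_sup (f := id) hi)⟩
  set φ : Ed 3 → ℝ := fun x => f x - m with hφ
  have hφm : Measurable φ := hf.sub_const m
  have hφ1 : ∀ x, |φ x| ≤ 1 := fun x => by
    rw [abs_le]; constructor <;> simp only [hφ] <;> linarith [hf0 x, hf1 x]
  set g : (ℕ → Ed 3) → ℝ := A.indicator 1 with hg
  have hgm : Measurable g := measurable_one.indicator hAm
  have hg1 : ∀ x, |g x| ≤ 1 := fun x => by
    simp only [hg, Set.indicator]; split_ifs <;> simp
  have hfb : ∀ i, Integrable (fun x : ℕ → Ed 3 => f (x i)) γ := fun i =>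
    Integrable.of_bound (hf.comp (measurable_pi_apply i)).aestronglyMeasurable 1
    (ae_of_all _ fun x => by
      rw [Real.norm_eq_abs, abs_le]; constructor <;> linarith [hf0 (x i), hf1 (x i)])
  have hff : Integrable (fun x : ℕ → Ed 3 => f (x 0) * f (x 1)) γ :=
    Integrable.of_bound (by fun_prop) 1
    (ae_of_all _ fun x => by
      rw [Real.norm_eq_abs, abs_of_nonneg (mul_nonneg (hf0 _) (hf0 _))]
      exact mul_le_one₀ (hf1 _) (hf0 _) (hf1 _))
  have hρ : ∫ x, φ (x 0) * φ (x 1) ∂γ = ∫ x, f (x 0) * f (x 1) ∂γ - m * m := by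
    have e : ∀ x : ℕ → Ed 3, φ (x 0) * φ (x 1) =
        f (x 0) * f (x 1) - m * f (x 0) - m * f (x 1) + m * m := fun x => by
      simp only [hφ]; ring
    simp only [e]
    have j1 : Integrable (fun x : ℕ → Ed 3 => f (x 0) * f (x 1) - m * f (x 0)) γ :=
      hff.sub ((hfb 0).const_mul m)
    have j2 : Integrable (fun x : ℕ → Ed 3 =>
        f (x 0) * f (x 1) - m * f (x 0) - m * f (x 1)) γ := j1.sub ((hfb 1).const_mul m)
    rw [integral_add j2 (integrable_const _), integral_sub j1 ((hfb 1).const_mul m),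
      integral_sub hff ((hfb 0).const_mul m), integral_const_mul, integral_const_mul,
      marg_integral hμ 0 f hf, marg_integral hμ 1 f hf]
    simp [← hm]
  have hfin := moment_concl (∫ x, φ x * φ x ∂μ) (∫ x, φ (x 0) * φ (x 1) ∂γ)
    (∫ x, g x * φ (x k) ∂γ) (fun n t =>
      moment γ (fun i x => φ (x (N + i))) (fun i => by fun_prop) (fun i x => hφ1 _) g hgm hg1
        _ _ _ (fun i => marg_integral hμ (N + i) (fun y => φ y * φ y) (by fun_prop))
        (fun i j hij => exch_pair hγ _ _ (by omega) φ hφm)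
        (fun i => by
          have := exch_integral hγ k (N + i) (fun x => g x * φ (x k)) (by fun_prop)
          rw [← this]
          simp only [Equiv.swap_apply_left]
          congr 1
          ext x
          congr 1
          have : (x ∈ A) ↔ (fun n => x (Equiv.swap k (N + i) n)) ∈ A := by
            simp only [hA, Set.mem_pi]
            refine forall₂_congr fun j hj => ?_
            rw [Equiv.swap_apply_of_ne_of_ne]
            · rintro rfl; exact hk hj
            · have := hN j hj; omega
          simp only [hg, Set.indicator, Pi.one_apply]
          by_cases hx : x ∈ A
          · rw [if_pos hx, if_pos (this.1 hx)]
          · rw [if_neg hx, if_neg (fun h' => hx (this.2 h'))]) n t)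
  rw [hρ] at hfin
  refine ⟨by linarith [hfin.1], fun h => ?_⟩
  have h2 := hfin.2 (by rw [h]; ring)
  have e : ∀ x : ℕ → Ed 3, g x * φ (x k) = A.indicator (fun x => φ (x k)) x := fun x => by
    simp only [hg, Set.indicator]; split_ifs <;> simp
  simp only [e] at h2
  rw [integral_indicator hAm] at h2
  simp only [hφ] at h2
  rw [integral_sub (hfb k).integrableOn (integrable_const _)] at h2
  simp at h2
  linarith

lemma core_enn {γ : Measure (ℕ → Ed 3)} [IsProbabilityMeasure γ] {μ : Measure (Ed 3)}
    [IsProbabilityMeasure μ]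
    (hγ : IsExchangeable γ) (hμ : HasMarginal γ μ) (p : ℝ × Ed 3)
    (s : Finset ℕ) (T : ℕ → Set (Ed 3)) (hT : ∀ i, MeasurableSet (T i)) (k : ℕ) (hk : k ∉ s) :
    (∫⁻ x, gF p x ∂μ) * (∫⁻ x, gF p x ∂μ) ≤ ∫⁻ x, gF p (x 0) * gF p (x 1) ∂γ ∧
    (∫⁻ x, gF p (x 0) * gF p (x 1) ∂γ = (∫⁻ x, gF p x ∂μ) * (∫⁻ x, gF p x ∂μ) →
      ∫⁻ x in Set.pi s T, gF p (x k) ∂γ = γ (Set.pi s T) * ∫⁻ x, gF p x ∂μ) := by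
  have hk0 : ∀ x, 0 ≤ gk p x := fun x => (gk_pos p x).le
  have hm := gk_measurable' p
  have hmi : ∀ i : ℕ, Measurable (fun x : ℕ → Ed 3 => gk p (x i)) := fun i =>
    hm.comp (measurable_pi_apply i)
  have b : ∀ x, ‖gk p x‖ ≤ 1 := fun x => by
    rw [Real.norm_eq_abs, abs_of_nonneg (hk0 x)]; exact gk_le_one p x
  have i1 : Integrable (gk p) μ := Integrable.of_bound hm.aestronglyMeasurable 1 (ae_of_all _ b)
  have i2 : Integrable (fun x : ℕ → Ed 3 => gk p (x k)) γ :=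
    Integrable.of_bound (hmi k).aestronglyMeasurable 1 (ae_of_all _ fun x => b _)
  have i3 : Integrable (fun x : ℕ → Ed 3 => gk p (x 0) * gk p (x 1)) γ :=
    Integrable.of_bound ((hmi 0).mul (hmi 1)).aestronglyMeasurable 1 (ae_of_all _ fun x => by
      rw [norm_mul]; exact mul_le_one₀ (b _) (norm_nonneg _) (b _))
  have e1 : ∫⁻ x, gF p x ∂μ = ENNReal.ofReal (∫ x, gk p x ∂μ) :=
    (ofReal_integral_eq_lintegral_ofReal i1 (ae_of_all _ hk0)).symm
  have e2 : ∫⁻ x in Set.pi s T, gF p (x k) ∂γ =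
      ENNReal.ofReal (∫ x in Set.pi s T, gk p (x k) ∂γ) :=
    (ofReal_integral_eq_lintegral_ofReal i2.integrableOn (ae_of_all _ fun x => hk0 _)).symm
  have e3 : ∫⁻ x, gF p (x 0) * gF p (x 1) ∂γ =
      ENNReal.ofReal (∫ x, gk p (x 0) * gk p (x 1) ∂γ) := by
    rw [ofReal_integral_eq_lintegral_ofReal i3
      (ae_of_all _ fun x => mul_nonneg (hk0 _) (hk0 _))]
    apply lintegral_congr
    intro x
    rw [ENNReal.ofReal_mul (hk0 _)]
    rfl
  have hm0 : 0 ≤ ∫ x, gk p x ∂μ := integral_nonneg hk0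
  have hq0 : 0 ≤ ∫ x, gk p (x 0) * gk p (x 1) ∂γ :=
    integral_nonneg fun x => mul_nonneg (hk0 _) (hk0 _)
  obtain ⟨h1, h2⟩ := exch_core hγ hμ (gk p) hm hk0 (gk_le_one p) s T hT k hk
  rw [e1, e2, e3, ← ENNReal.ofReal_mul hm0]
  refine ⟨ENNReal.ofReal_le_ofReal h1, fun h => ?_⟩
  rw [ENNReal.ofReal_eq_ofReal_iff hq0 (by positivity)] at h
  rw [h2 h, ENNReal.ofReal_mul (by positivity)]
  congr 1
  simp [Measure.real]

lemma gW_top (s : ℝ) : gW s ≠ ⊤ := ENNReal.ofReal_ne_top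

attribute [irreducible] gk gW gF

lemma coulomb_measurable : Measurable (fun q : Ed 3 × Ed 3 => coulomb q.1 q.2) := by
  unfold coulomb
  fun_prop

lemma Cinf_eq (γ : Measure (ℕ → Ed 3)) [IsProbabilityMeasure γ] :
    Cinf coulomb γ = ∫⁻ p : ℝ × Ed 3, gW p.1 * ∫⁻ x, gF p (x 0) * gF p (x 1) ∂γ := by
  unfold Cinf
  simp only [coulomb_eq]
  have hg : ∀ i : ℕ, Measurable (fun q : (ℕ → Ed 3) × (ℝ × Ed 3) => gF q.2 (q.1 i)) := fun i =>
    gF_measurable.comp (measurable_snd.prodMk ((measurable_pi_apply i).comp measurable_fst))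
  have hw : Measurable (fun q : (ℕ → Ed 3) × (ℝ × Ed 3) => gW q.2.1) :=
    gW_measurable.comp (measurable_fst.comp measurable_snd)
  have ht : Measurable (fun q : (ℕ → Ed 3) × (ℝ × Ed 3) =>
      gW q.2.1 * (gF q.2 (q.1 0) * gF q.2 (q.1 1))) := hw.mul ((hg 0).mul (hg 1))
  rw [lintegral_lintegral_swap ht.aemeasurable]
  apply lintegral_congr
  intro p
  have h0 : Measurable (fun x : ℕ → Ed 3 => gF p (x 0)) :=
    (gF_measurable' p).comp (measurable_pi_apply 0)
  have h1 : Measurable (fun x : ℕ → Ed 3 => gF p (x 1)) :=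
    (gF_measurable' p).comp (measurable_pi_apply 1)
  exact lintegral_const_mul _ (h0.mul h1)

lemma mf_eq (μ : Measure (Ed 3)) [IsProbabilityMeasure μ] :
    ∫⁻ x, ∫⁻ y, coulomb x y ∂μ ∂μ =
      ∫⁻ p : ℝ × Ed 3, gW p.1 * ((∫⁻ x, gF p x ∂μ) * (∫⁻ x, gF p x ∂μ)) := by
  rw [lintegral_lintegral coulomb_measurable.aemeasurable]
  simp only [coulomb_eq]
  have h1 : Measurable (fun q : (Ed 3 × Ed 3) × (ℝ × Ed 3) => gF q.2 q.1.1) :=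
    gF_measurable.comp (measurable_snd.prodMk (measurable_fst.comp measurable_fst))
  have h2 : Measurable (fun q : (Ed 3 × Ed 3) × (ℝ × Ed 3) => gF q.2 q.1.2) :=
    gF_measurable.comp (measurable_snd.prodMk (measurable_snd.comp measurable_fst))
  have hw : Measurable (fun q : (Ed 3 × Ed 3) × (ℝ × Ed 3) => gW q.2.1) :=
    gW_measurable.comp (measurable_fst.comp measurable_snd)
  have ht : Measurable (fun q : (Ed 3 × Ed 3) × (ℝ × Ed 3) =>
      gW q.2.1 * (gF q.2 q.1.1 * gF q.2 q.1.2)) := hw.mul (h1.mul h2)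
  rw [lintegral_lintegral_swap ht.aemeasurable]
  apply lintegral_congr
  intro p
  have hp := gF_measurable' p
  have k1 : Measurable (fun x : Ed 3 × Ed 3 => gF p x.1) := hp.comp measurable_fst
  have k2 : Measurable (fun x : Ed 3 × Ed 3 => gF p x.2) := hp.comp measurable_snd
  have k3 : Measurable (fun x : Ed 3 × Ed 3 => gF p x.1 * gF p x.2) := k1.mul k2
  rw [lintegral_const_mul _ k3, lintegral_prod_mul hp.aemeasurable hp.aemeasurable]

lemma lower {γ : Measure (ℕ → Ed 3)} [IsProbabilityMeasure γ] {μ : Measure (Ed 3)}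
    [IsProbabilityMeasure μ] (hγ : IsExchangeable γ) (hμ : HasMarginal γ μ) :
    ∫⁻ x, ∫⁻ y, coulomb x y ∂μ ∂μ ≤ Cinf coulomb γ := by
  rw [mf_eq, Cinf_eq]
  apply lintegral_mono
  intro p
  have := (core_enn hγ hμ p ∅ (fun _ => Set.univ) (fun _ => MeasurableSet.univ) 0 (by simp)).1
  exact mul_le_mul' le_rfl this

lemma uniq {γ : Measure (ℕ → Ed 3)} [IsProbabilityMeasure γ] {μ : Measure (Ed 3)}
    [IsProbabilityMeasure μ] (hγ : IsExchangeable γ) (hμ : HasMarginal γ μ)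
    (hfin : ∫⁻ x, ∫⁻ y, coulomb x y ∂μ ∂μ < ⊤)
    (h : Cinf coulomb γ = ∫⁻ x, ∫⁻ y, coulomb x y ∂μ ∂μ) :
    γ = Measure.infinitePi (fun _ : ℕ => μ) := by
  have hle : ∀ p, (∫⁻ x, gF p x ∂μ) * (∫⁻ x, gF p x ∂μ) ≤ ∫⁻ x, gF p (x 0) * gF p (x 1) ∂γ :=
    fun p => (core_enn hγ hμ p ∅ (fun _ => Set.univ) (fun _ => MeasurableSet.univ) 0 (by simp)).1
  rw [mf_eq] at h hfin
  rw [Cinf_eq] at h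
  have hg : ∀ i : ℕ, Measurable (fun q : (ℝ × Ed 3) × (ℕ → Ed 3) => gF q.1 (q.2 i)) := fun i =>
    gF_measurable.comp (measurable_fst.prodMk ((measurable_pi_apply i).comp measurable_snd))
  have hw : Measurable (fun p : ℝ × Ed 3 => gW p.1) := gW_measurable.comp measurable_fst
  have hq : Measurable (fun p : ℝ × Ed 3 => ∫⁻ x, gF p (x 0) * gF p (x 1) ∂γ) :=
    ((hg 0).mul (hg 1)).lintegral_prod_right'
  have hQ : Measurable (fun p : ℝ × Ed 3 => gW p.1 * ∫⁻ x, gF p (x 0) * gF p (x 1) ∂γ) :=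
    hw.mul hq
  have hle2 : ∀ p : ℝ × Ed 3, gW p.1 * ((∫⁻ x, gF p x ∂μ) * (∫⁻ x, gF p x ∂μ)) ≤
      gW p.1 * ∫⁻ x, gF p (x 0) * gF p (x 1) ∂γ := fun p => mul_le_mul' le_rfl (hle p)
  have hae := ae_eq_of_ae_le_of_lintegral_le (ae_of_all _ hle2)
    hfin.ne hQ.aemeasurable h.le
  rw [Measure.volume_eq_prod] at hae
  have hae2 := Measure.ae_ae_of_ae_prod hae
  have h0 : ∀ᵐ s : ℝ, s ≠ 0 := by simp [ae_iff]
  obtain ⟨s, hs, hs0⟩ := (hae2.and h0).exists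
  have hz : ∀ᵐ z : Ed 3, ∫⁻ x, gF (s, z) (x 0) * gF (s, z) (x 1) ∂γ =
      (∫⁻ x, gF (s, z) x ∂μ) * (∫⁻ x, gF (s, z) x ∂μ) := by
    filter_upwards [hs] with z hz
    exact ((ENNReal.mul_right_inj (gW_pos hs0) (gW_top s)).1 hz).symm
  apply Measure.eq_infinitePi
  intro S T hT
  induction S using Finset.induction_on with
  | empty => simp
  | insert k S hk ih =>
    have hαβ : (γ.restrict (Set.pi S T)).map (fun x => x k) = γ (Set.pi S T) • μ := by
      have : IsFiniteMeasure (γ (Set.pi S T) • μ) := Measure.smul_finite _ (measure_ne_top _ _)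
      apply ext_of_gauss hs0
      filter_upwards [hz] with z hz
      rw [lintegral_map (gF_measurable' _) (measurable_pi_apply k), lintegral_smul_measure]
      exact (core_enn hγ hμ (s, z) S T hT k hk).2 hz
    have : (γ.restrict (Set.pi S T)).map (fun x => x k) (T k) = (γ (Set.pi S T) • μ) (T k) := by
      rw [hαβ]
    rw [Measure.map_apply (measurable_pi_apply k) (hT k), Measure.restrict_apply
      (measurable_pi_apply k (hT k)), ih] at this
    rw [Finset.prod_insert hk, mul_comm, Finset.coe_insert, Set.insert_pi]
    simpa using this

lemma infprod_eq {γ : Measure (ℕ → Ed 3)} {μ : Measure (Ed 3)}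
    [IsProbabilityMeasure μ] (h : IsInfiniteProduct γ μ) :
    γ = Measure.infinitePi (fun _ : ℕ => μ) := by
  apply Measure.eq_infinitePi
  intro S T hT
  obtain ⟨N, hN⟩ : ∃ N, ∀ i ∈ S, i < N := ⟨S.sup id + 1, fun i hi =>
    Nat.lt_succ_of_le (Finset.le_sup (f := id) hi)⟩
  classical
  set T' : ℕ → Set (Ed 3) := fun i => if i ∈ S then T i else Set.univ with hT'
  have hTm : ∀ i, MeasurableSet (T' i) := fun i => by
    simp only [hT']; split_ifs
    · exact hT i
    · exact MeasurableSet.univ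
  have e : Set.pi S T = (fun (x : ℕ → Ed 3) (i : Fin N) => x i.val) ⁻¹'
      (Set.univ.pi fun i : Fin N => T' i) := by
    ext x
    simp only [Set.mem_pi, Set.mem_preimage, Set.mem_univ, true_imp_iff, hT']
    constructor
    · intro hx i
      split_ifs with hi
      · exact hx _ hi
      · trivial
    · intro hx i hi
      have := hx ⟨i, hN i hi⟩
      have hi' : i ∈ S := hi
      simpa [hi'] using this
  have hm : Measurable (fun (x : ℕ → Ed 3) (i : Fin N) => x i.val) :=
    measurable_pi_lambda _ fun i => measurable_pi_apply _
  rw [e, ← Measure.map_apply hm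
    (MeasurableSet.univ_pi fun i => hTm i), h N, Measure.pi_pi,
    Fin.prod_univ_eq_prod_range (fun i => μ (T' i)) N]
  have hsub : S ⊆ Finset.range N := fun i hi => Finset.mem_range.2 (hN i hi)
  rw [← Finset.prod_subset hsub]
  · exact Finset.prod_congr rfl fun i hi => by simp [hT', hi]
  · intro i _ hi
    simp [hT', hi]

lemma ip_exch (μ : Measure (Ed 3)) [IsProbabilityMeasure μ] :
    IsExchangeable (Measure.infinitePi (fun _ : ℕ => μ)) := by
  intro σ _
  apply Measure.eq_infinitePi
  intro S T hT
  have hm : Measurable (fun (x : ℕ → Ed 3) n => x (σ n)) :=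
    measurable_pi_lambda _ fun n => measurable_pi_apply _
  rw [Measure.map_apply hm
    (MeasurableSet.pi S.countable_toSet fun i _ => hT i)]
  have e : (fun (x : ℕ → Ed 3) n => x (σ n)) ⁻¹' (Set.pi S T) =
      Set.pi (S.map σ.toEmbedding : Finset ℕ) (fun i => T (σ.symm i)) := by
    ext x
    simp only [Set.mem_preimage, Set.mem_pi, Finset.mem_coe, Finset.mem_map]
    constructor
    · rintro h _ ⟨i, hi, rfl⟩
      have := h i hi
      simp only [Equiv.coe_toEmbedding]
      rwa [Equiv.symm_apply_apply]
    · intro h i hi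
      have := h (σ i) ⟨i, hi, rfl⟩
      rwa [Equiv.symm_apply_apply] at this
  rw [e, Measure.infinitePi_pi _ (fun i _ => hT _), Finset.prod_map]
  refine Finset.prod_congr rfl fun i _ => ?_
  simp only [Equiv.coe_toEmbedding]
  rw [Equiv.symm_apply_apply]

lemma ip_marg (μ : Measure (Ed 3)) [IsProbabilityMeasure μ] :
    HasMarginal (Measure.infinitePi (fun _ : ℕ => μ)) μ := by
  intro n
  ext S hS
  rw [Measure.map_apply (measurable_pi_apply n) hS]
  have := Measure.infinitePi_pi (fun _ : ℕ => μ) (s := {n}) (t := fun _ => S) (fun i _ => hS)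
  simpa [Set.singleton_pi'] using this

lemma ip_cost (μ : Measure (Ed 3)) [IsProbabilityMeasure μ] :
    Cinf coulomb (Measure.infinitePi (fun _ : ℕ => μ)) = ∫⁻ x, ∫⁻ y, coulomb x y ∂μ ∂μ := by
  rw [lintegral_lintegral coulomb_measurable.aemeasurable]
  have hm : Measurable (fun x : ℕ → Ed 3 => (x 0, x 1)) :=
    (measurable_pi_apply 0).prodMk (measurable_pi_apply 1)
  have e : (Measure.infinitePi (fun _ : ℕ => μ)).map (fun x : ℕ → Ed 3 => (x 0, x 1)) =
      μ.prod μ := by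
    symm
    apply Measure.prod_eq
    intro A B hA hB
    rw [Measure.map_apply hm (hA.prod hB)]
    have := Measure.infinitePi_pi (fun _ : ℕ => μ) (s := {0, 1})
      (t := fun i => if i = 0 then A else B) (fun i _ => by
        split_ifs
        · exact hA
        · exact hB)
    rw [Finset.prod_pair (by norm_num)] at this
    simp only [if_true, one_ne_zero, if_false] at this
    rw [← this]
    congr 1
    ext x
    simp [Set.mem_pi]
  rw [← e, lintegral_map coulomb_measurable hm]
  rfl

/-- Theorem 1.1, Coulomb case: for the Coulomb cost `1/|x-y|` in `d = 3` and any
marginal `μ` with finite mean-field energy, the independent product measure `μ^⊗∞`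
is the unique minimizer of the infinite-body OT problem, and
`F_∞^OT[μ] = ∫∫ dμ(x) dμ(y)/|x-y|`. -/
theorem coulomb_infinite_body_OT_unique_minimizer
    (μ : Measure (Ed 3)) [IsProbabilityMeasure μ]
    (hfin : ∫⁻ x, ∫⁻ y, coulomb x y ∂μ ∂μ < ⊤)
    (γ₀ : Measure (ℕ → Ed 3)) [IsProbabilityMeasure γ₀]
    (hγ₀ : IsInfiniteProduct γ₀ μ) :
    IsExchangeable γ₀ ∧ HasMarginal γ₀ μ ∧
    Cinf coulomb γ₀ = FinfOT coulomb μ ∧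
    FinfOT coulomb μ = ∫⁻ x, ∫⁻ y, coulomb x y ∂μ ∂μ ∧
    (∀ γ : Measure (ℕ → Ed 3), IsProbabilityMeasure γ → IsExchangeable γ →
      HasMarginal γ μ → Cinf coulomb γ = FinfOT coulomb μ → γ = γ₀) := by
  have he := infprod_eq hγ₀
  have hF : FinfOT coulomb μ = ∫⁻ x, ∫⁻ y, coulomb x y ∂μ ∂μ := by
    apply le_antisymm
    · unfold FinfOT
      refine (iInf_le _ (Measure.infinitePi (fun _ : ℕ => μ))).trans ?_
      refine (iInf_le _ (inferInstance : IsProbabilityMeasure (Measure.infinitePi (fun _ : ℕ => μ)))).trans ?_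
      refine (iInf_le _ (ip_exch μ)).trans ?_
      refine (iInf_le _ (ip_marg μ)).trans ?_
      exact (ip_cost μ).le
    · unfold FinfOT
      refine le_iInf fun γ => le_iInf fun h1 => le_iInf fun h2 => le_iInf fun h3 => ?_
      exact lower h2 h3
  refine ⟨?_, ?_, ?_, hF, ?_⟩
  · rw [he]; exact ip_exch μ
  · rw [he]; exact ip_marg μ
  · rw [hF, he]; exact ip_cost μ
  · intro γ h1 h2 h3 h4
    rw [he]
    exact uniq h2 h3 hfin (h4.trans hF)
end
end

section
/- Let c : ℝ^d × ℝ^d → [0,∞] be Borel measurable, symmetric and lower semi-continuous (as a map into [0,∞] with its natural topology). Let μ be a Borel probability measure on ℝ^d such that there exists γ₀ ∈ P_sym^∞(ℝ^d) with γ₀ ↦ μ and ∫ c(x₁,x₂) dγ₀ < ∞. Then lim_{N→∞} F_N^OT[μ] = F_∞^OT[μ]. -/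
open MeasureTheory ENNReal Filter Topology ProbabilityTheory

noncomputable section

/-- A measure on `(ℝ^d)^N` is symmetric if it is invariant under all permutations
of the coordinates. -/
def IsSymmetricN {d N : ℕ} (γ : Measure (Fin N → Ed d)) : Prop :=
  ∀ σ : Equiv.Perm (Fin N), γ.map (fun x i => x (σ i)) = γ

/-- The `N`-body cost `Σ_{1 ≤ i < j ≤ N} c(x_i, x_j)`. -/
def pairCost {d N : ℕ} (c : Ed d → Ed d → ℝ≥0∞) (x : Fin N → Ed d) : ℝ≥0∞ :=
  ∑ i : Fin N, ∑ j : Fin N, if i < j then c (x i) (x j) else 0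

/-- The optimal cost per particle pair of the `N`-body optimal transport problem:
`F_N^OT[μ] = (1/binom(N,2)) inf { ∫ Σ_{i<j} c(x_i,x_j) dγ_N : γ_N ∈ P_sym^N(ℝ^d), γ_N ↦ μ }`. -/
def FNOT {d : ℕ} (N : ℕ) (c : Ed d → Ed d → ℝ≥0∞) (μ : Measure (Ed d)) : ℝ≥0∞ :=
  (N.choose 2 : ℝ≥0∞)⁻¹ *
    ⨅ (γ : Measure (Fin N → Ed d)) (_ : IsProbabilityMeasure γ) (_ : IsSymmetricN γ)
      (_ : ∀ i : Fin N, γ.map (fun x => x i) = μ), ∫⁻ x, pairCost c x ∂γ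

theorem aux_lsc {Ω : Type*} [TopologicalSpace Ω] [MeasurableSpace Ω] [OpensMeasurableSpace Ω]
    {μ : Measure Ω} {μs : ℕ → Measure Ω} {f : Ω → ℝ≥0∞} (hf : LowerSemicontinuous f)
    (h_opens : ∀ G, IsOpen G → μ G ≤ atTop.liminf (fun i ↦ μs i G)) :
    ∫⁻ x, f x ∂μ ≤ atTop.liminf (fun i ↦ ∫⁻ x, f x ∂(μs i)) := by
  have hfm : Measurable f := hf.measurable
  have key : ∀ k : ℕ, ∫⁻ x, min (f x) k ∂μ ≤ atTop.liminf (fun i ↦ ∫⁻ x, f x ∂(μs i)) := by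
    intro k
    have e1 : ∀ x, min (f x) k = ENNReal.ofReal ((min (f x) (k : ℝ≥0∞)).toReal) := fun x =>
      (ENNReal.ofReal_toReal (ne_top_of_le_ne_top (ENNReal.natCast_ne_top k) (min_le_right _ _))).symm
    have hm : Measurable fun x => (min (f x) (k : ℝ≥0∞)).toReal :=
      (hfm.min measurable_const).ennreal_toReal
    have layer : ∀ ν : Measure Ω, ∫⁻ x, min (f x) k ∂ν =
        ∫⁻ t in Set.Ioi (0:ℝ), ν {a | t < (min (f a) (k : ℝ≥0∞)).toReal} := by
      intro ν
      rw [← lintegral_eq_lintegral_meas_lt ν (Eventually.of_forall fun _ => ENNReal.toReal_nonneg)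
        hm.aemeasurable]
      exact lintegral_congr e1
    have hopen : ∀ t ∈ Set.Ioi (0:ℝ), IsOpen {a | t < (min (f a) (k : ℝ≥0∞)).toReal} := by
      intro t ht
      have : {a | t < (min (f a) (k : ℝ≥0∞)).toReal} =
          {a | ENNReal.ofReal t < f a} ∩ {a | ENNReal.ofReal t < k} := by
        ext a
        simp only [Set.mem_ofPred_eq, Set.mem_inter_iff]
        rw [← ENNReal.ofReal_lt_iff_lt_toReal (le_of_lt ht)
          (ne_top_of_le_ne_top (ENNReal.natCast_ne_top k) (min_le_right _ _)), lt_min_iff]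
      rw [this]
      exact (hf.isOpen_preimage _).inter isOpen_const
    calc ∫⁻ x, min (f x) k ∂μ
        = ∫⁻ t in Set.Ioi (0:ℝ), μ {a | t < (min (f a) (k : ℝ≥0∞)).toReal} := layer μ
      _ ≤ ∫⁻ t in Set.Ioi (0:ℝ),
            atTop.liminf (fun i => μs i {a | t < (min (f a) (k : ℝ≥0∞)).toReal}) :=
          setLIntegral_mono' measurableSet_Ioi fun t ht => h_opens _ (hopen t ht)
      _ ≤ atTop.liminf (fun i => ∫⁻ t in Set.Ioi (0:ℝ),
            μs i {a | t < (min (f a) (k : ℝ≥0∞)).toReal}) :=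
          lintegral_liminf_le (fun n ↦ Antitone.measurable (fun s t hst ↦
            measure_mono (fun ω hω ↦ lt_of_le_of_lt hst hω)))
      _ ≤ _ := by
          refine liminf_le_liminf (Eventually.of_forall fun i => ?_)
          rw [← layer]
          exact lintegral_mono fun x => min_le_left _ _
  have e : ∀ x, f x = ⨆ k : ℕ, min (f x) k := by
    intro x
    apply le_antisymm
    · apply le_of_forall_lt
      intro b hb
      obtain ⟨k, hk⟩ := ENNReal.exists_nat_gt hb.ne_top
      exact lt_of_lt_of_le (lt_min hb hk) (le_iSup (fun k : ℕ => min (f x) (k:ℝ≥0∞)) k)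
    · exact iSup_le fun k => min_le_left _ _
  have : ∫⁻ x, f x ∂μ = ⨆ k : ℕ, ∫⁻ x, min (f x) k ∂μ := by
    rw [← lintegral_iSup (fun k => hfm.min measurable_const)]
    · exact lintegral_congr e
    · intro a b hab x
      exact min_le_min le_rfl (by exact_mod_cast hab)
  rw [this]
  exact iSup_le key

theorem aux_perm {ι : Type*} [DecidableEq ι] {a b i j : ι} (hab : a ≠ b) (hij : i ≠ j) :
    ∃ σ : Equiv.Perm ι, σ a = i ∧ σ b = j := by
  refine ⟨Equiv.swap (Equiv.swap a i b) j * Equiv.swap a i, ?_, ?_⟩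
  · simp only [Equiv.Perm.mul_apply, Equiv.swap_apply_left]
    refine Equiv.swap_apply_of_ne_of_ne ?_ hij
    intro h
    have := congrArg (Equiv.swap a i) h
    simp at this
    exact hab this
  · simp [Equiv.Perm.mul_apply]

theorem aux_count (N : ℕ) :
    (∑ i : Fin N, ∑ j : Fin N, if i < j then (1:ℕ) else 0) = N.choose 2 := by
  induction N with
  | zero => simp
  | succ n ih =>
    rw [Fin.sum_univ_succ]
    simp only [Fin.sum_univ_succ (n := n), Fin.succ_lt_succ_iff, Fin.succ_pos, if_true]
    rw [Nat.choose_succ_succ, ← ih]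
    simp

theorem aux_meas {d : ℕ} {ι : Type} {c : Ed d → Ed d → ℝ≥0∞}
    (hmeas : Measurable fun p : Ed d × Ed d => c p.1 p.2) (i j : ι) :
    Measurable fun x : ι → Ed d => c (x i) (x j) :=
  Measurable.comp (g := fun p : Ed d × Ed d => c p.1 p.2) (f := fun x : ι → Ed d => (x i, x j))
    hmeas (by fun_prop)

theorem aux_cost {d N : ℕ} {c : Ed d → Ed d → ℝ≥0∞}
    (hmeas : Measurable fun p : Ed d × Ed d => c p.1 p.2)
    {γ : Measure (Fin N → Ed d)} (hγ : IsSymmetricN γ) {a b : Fin N} (hab : a ≠ b) :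
    ∫⁻ x, pairCost c x ∂γ = (N.choose 2 : ℝ≥0∞) * ∫⁻ x, c (x a) (x b) ∂γ := by
  have hm : ∀ i j : Fin N, Measurable fun x : Fin N → Ed d => c (x i) (x j) := fun i j =>
    aux_meas hmeas i j
  have hp : ∀ i j : Fin N, i ≠ j → ∫⁻ x, c (x i) (x j) ∂γ = ∫⁻ x, c (x a) (x b) ∂γ := by
    intro i j hij
    obtain ⟨σ, rfl, rfl⟩ := aux_perm hab hij
    conv_rhs => rw [← hγ σ]
    rw [lintegral_map (hm a b) (by fun_prop)]
  unfold pairCost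
  rw [lintegral_finsetSum _ (fun i _ => Finset.measurable_fun_sum _ fun j _ => by
    split_ifs; exacts [hm i j, measurable_const])]
  rw [← aux_count N]
  push_cast
  rw [Finset.sum_mul]
  refine Finset.sum_congr rfl fun i _ => ?_
  rw [lintegral_finsetSum _ (fun j _ => by split_ifs; exacts [hm i j, measurable_const]),
    Finset.sum_mul]
  refine Finset.sum_congr rfl fun j _ => ?_
  split_ifs with h
  · simp [hp i j h.ne]
  · simp

theorem aux_cancel {N : ℕ} (hN : 2 ≤ N) (I : ℝ≥0∞) :
    (N.choose 2 : ℝ≥0∞)⁻¹ * ((N.choose 2 : ℝ≥0∞) * I) = I := by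
  rw [← mul_assoc, ENNReal.inv_mul_cancel, one_mul]
  · exact_mod_cast (Nat.choose_pos hN).ne'
  · exact ENNReal.natCast_ne_top _

theorem aux_le {d : ℕ} {c : Ed d → Ed d → ℝ≥0∞}
    (hmeas : Measurable fun p : Ed d × Ed d => c p.1 p.2) (μ : Measure (Ed d))
    {N : ℕ} (hN : 2 ≤ N) : FNOT N c μ ≤ FinfOT c μ := by
  unfold FinfOT
  refine le_iInf fun γ => le_iInf fun hp => le_iInf fun hs => le_iInf fun hm => ?_
  have hr : Measurable fun (x : ℕ → Ed d) (i : Fin N) => x i := by fun_prop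
  have hsym : IsSymmetricN (γ.map fun (x : ℕ → Ed d) (i : Fin N) => x i) := by
    intro σ
    rw [Measure.map_map (by fun_prop) hr]
    have h1 := hs (σ.viaFintypeEmbedding Fin.valEmbedding) (by
      refine (Set.finite_lt_nat N).subset fun n hn => ?_
      by_contra h
      refine hn (Equiv.Perm.viaFintypeEmbedding_apply_notMem_range _ _ ?_)
      rintro ⟨y, rfl⟩
      exact h y.2)
    conv_rhs => rw [← h1]
    rw [Measure.map_map hr (by fun_prop)]
    congr 1
    ext x i : 2
    have := Equiv.Perm.viaFintypeEmbedding_apply_image σ Fin.valEmbedding i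
    simp only [Fin.valEmbedding_apply] at this
    simp [this]
  have hab : (⟨0, by omega⟩ : Fin N) ≠ ⟨1, by omega⟩ := by simp
  have hle : (⨅ (γ : Measure (Fin N → Ed d)) (_ : IsProbabilityMeasure γ) (_ : IsSymmetricN γ)
      (_ : ∀ i : Fin N, γ.map (fun x => x i) = μ), ∫⁻ x, pairCost c x ∂γ) ≤
      (N.choose 2 : ℝ≥0∞) * Cinf c γ := by
    refine (iInf_le_of_le (γ.map fun (x : ℕ → Ed d) (i : Fin N) => x i) <|
      iInf_le_of_le (Measure.isProbabilityMeasure_map hr.aemeasurable) <| iInf_le_of_le hsym <|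
      iInf_le_of_le (fun i => ?_) le_rfl).trans ?_
    · rw [Measure.map_map (by fun_prop) hr]
      exact hm i
    · rw [aux_cost hmeas hsym hab, lintegral_map ?_ hr]
      · rfl
      · exact aux_meas hmeas _ _
  unfold FNOT
  calc _ ≤ (N.choose 2 : ℝ≥0∞)⁻¹ * ((N.choose 2 : ℝ≥0∞) * Cinf c γ) := by gcongr
    _ = _ := aux_cancel hN _

/-- extension by zero -/
def extZ {d N : ℕ} (x : Fin N → Ed d) : ℕ → Ed d := fun n => if h : n < N then x ⟨n, h⟩ else 0

theorem extZ_meas {d N : ℕ} : Measurable (extZ : (Fin N → Ed d) → ℕ → Ed d) := by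
  refine measurable_pi_lambda _ fun n => ?_
  unfold extZ
  split_ifs with h
  · fun_prop
  · exact measurable_const

theorem aux_good {d : ℕ} {c : Ed d → Ed d → ℝ≥0∞}
    (hmeas : Measurable fun p : Ed d × Ed d => c p.1 p.2) {μ : Measure (Ed d)}
    {a : ℝ≥0∞} {N : ℕ} (hN : 2 ≤ N) (h : FNOT N c μ < a) :
    ∃ ν : ProbabilityMeasure (ℕ → Ed d),
      (∀ σ : Equiv.Perm ℕ, (∀ n, N ≤ n → σ n = n) →
        (ν : Measure (ℕ → Ed d)).map (fun x n => x (σ n)) = ν) ∧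
      (∀ n < N, (ν : Measure (ℕ → Ed d)).map (fun x => x n) = μ) ∧
      (∀ n, N ≤ n → (ν : Measure (ℕ → Ed d)).map (fun x => x n) = Measure.dirac 0) ∧
      Cinf c (ν : Measure (ℕ → Ed d)) ≤ a := by
  have hab : (⟨0, by omega⟩ : Fin N) ≠ ⟨1, by omega⟩ := by simp
  have h' : (⨅ (γ : Measure (Fin N → Ed d)) (_ : IsProbabilityMeasure γ) (_ : IsSymmetricN γ)
      (_ : ∀ i : Fin N, γ.map (fun x => x i) = μ), ∫⁻ x, pairCost c x ∂γ) <
      (N.choose 2 : ℝ≥0∞) * a := by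
    by_contra hc
    push Not at hc
    refine absurd h (not_lt.2 ?_)
    unfold FNOT
    calc a = (N.choose 2 : ℝ≥0∞)⁻¹ * ((N.choose 2 : ℝ≥0∞) * a) := (aux_cancel hN _).symm
      _ ≤ _ := by gcongr
  simp only [iInf_lt_iff] at h'
  obtain ⟨γ, hp, hs, hm, hc⟩ := h'
  rw [aux_cost hmeas hs hab] at hc
  have hc' : ∫⁻ x, c (x ⟨0, by omega⟩) (x ⟨1, by omega⟩) ∂γ ≤ a := by
    rw [← aux_cancel hN (∫⁻ x, c _ _ ∂γ), ← aux_cancel hN a]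
    gcongr
  refine ⟨⟨γ.map extZ, Measure.isProbabilityMeasure_map extZ_meas.aemeasurable⟩, ?_, ?_, ?_, ?_⟩
  · intro σ hσ
    simp only [ProbabilityMeasure.coe_mk]
    have hlt : ∀ n, n < N ↔ σ n < N := by
      intro n
      constructor
      · intro hn
        by_contra hcon
        have := σ.injective (hσ (σ n) (not_lt.1 hcon))
        omega
      · intro hn
        by_contra hcon
        have := hσ n (not_lt.1 hcon)
        omega
    let τ : Equiv.Perm (Fin N) :=
      { toFun := fun i => ⟨σ i, (hlt i).1 i.2⟩
        invFun := fun i => ⟨σ.symm i, (hlt _).2 (by simp)⟩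
        left_inv := fun i => by simp
        right_inv := fun i => by simp }
    rw [Measure.map_map (by fun_prop) extZ_meas]
    conv_rhs => rw [← hs τ]
    rw [Measure.map_map extZ_meas (by fun_prop)]
    congr 1
    ext x n : 2
    simp only [Function.comp, extZ, τ]
    by_cases hn : n < N
    · simp [hn, (hlt n).1 hn]
    · have : ¬ σ n < N := fun h => hn ((hlt n).2 h)
      simp [hn, this]
  · intro n hn
    simp only [ProbabilityMeasure.coe_mk]
    rw [Measure.map_map (by fun_prop) extZ_meas, ← hm ⟨n, hn⟩]
    congr 1
    ext x : 1
    simp [extZ, hn]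
  · intro n hn
    simp only [ProbabilityMeasure.coe_mk]
    rw [Measure.map_map (by fun_prop) extZ_meas]
    have : ((fun x : ℕ → Ed d => x n) ∘ (extZ : (Fin N → Ed d) → _)) = fun _ => 0 := by
      ext x : 1
      simp [extZ, not_lt.2 hn]
    rw [this, Measure.map_const]
    simp
  · simp only [ProbabilityMeasure.coe_mk]
    unfold Cinf
    rw [lintegral_map (aux_meas hmeas 0 1) extZ_meas]
    have h0 : 0 < N := by omega
    have h1 : 1 < N := by omega
    simpa [extZ, h0, h1] using hc'

theorem aux_tight {d : ℕ} (μ : Measure (Ed d)) [IsProbabilityMeasure μ]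
    (S : Set (ProbabilityMeasure (ℕ → Ed d)))
    (hS : ∀ ν ∈ S, ∀ n, (ν : Measure (ℕ → Ed d)).map (fun x => x n) = μ ∨
      (ν : Measure (ℕ → Ed d)).map (fun x => x n) = Measure.dirac 0) :
    IsTightMeasureSet {((ν : ProbabilityMeasure (ℕ → Ed d)) : Measure (ℕ → Ed d)) | ν ∈ S} := by
  rw [isTightMeasureSet_iff_exists_isCompact_measure_compl_le]
  intro ε hε
  obtain ⟨δ, hδ, hsum⟩ := ENNReal.exists_pos_sum_of_countable' hε.ne' ℕ
  have ht : IsTightMeasureSet {μ} := isTightMeasureSet_singleton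
  rw [isTightMeasureSet_iff_exists_isCompact_measure_compl_le] at ht
  choose K hK hKμ using fun n => ht (δ n) (hδ n)
  refine ⟨Set.pi Set.univ fun n => insert 0 (K n), isCompact_univ_pi fun n => (hK n).insert 0, ?_⟩
  rintro _ ⟨ν, hν, rfl⟩
  have hcompl : (Set.pi Set.univ fun n => insert (0 : Ed d) (K n))ᶜ =
      ⋃ n, (fun x : ℕ → Ed d => x n) ⁻¹' (insert 0 (K n))ᶜ := by
    ext x
    simp [Set.mem_pi]
  rw [hcompl]
  refine (measure_iUnion_le _).trans ((ENNReal.tsum_le_tsum fun n => ?_).trans hsum.le)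
  have hms : MeasurableSet (insert (0 : Ed d) (K n))ᶜ :=
    ((hK n).insert 0).isClosed.measurableSet.compl
  rw [← Measure.map_apply (by fun_prop) hms]
  rcases hS ν hν n with h | h
  · rw [h]
    exact (measure_mono (Set.compl_subset_compl.2 (Set.subset_insert _ _))).trans (hKμ n μ rfl)
  · rw [h, Measure.dirac_apply' _ hms]
    simp

theorem aux_ge {d : ℕ} {c : Ed d → Ed d → ℝ≥0∞}
    (hmeas : Measurable fun p : Ed d × Ed d => c p.1 p.2)
    (hlsc : LowerSemicontinuous fun p : Ed d × Ed d => c p.1 p.2)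
    (μ : Measure (Ed d)) [IsProbabilityMeasure μ] {a : ℝ≥0∞}
    (h : ∃ᶠ N in atTop, FNOT N c μ < a) : FinfOT c μ ≤ a := by
  obtain ⟨φ, hφ, hφa⟩ := extraction_of_frequently_atTop (h.and_eventually (eventually_ge_atTop 2))
  choose ν h1 h2 h3 h4 using fun k => aux_good hmeas (hφa k).2 (hφa k).1
  have hcomp := isCompact_closure_of_isTightMeasureSet (aux_tight μ (Set.range ν) (by
    rintro _ ⟨k, rfl⟩ n
    rcases lt_or_ge n (φ k) with hn | hn
    · exact Or.inl (h2 k n hn)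
    · exact Or.inr (h3 k n hn)))
  obtain ⟨γ, -, ψ, hψ, hlim⟩ := hcomp.tendsto_subseq (x := ν)
    (fun k => subset_closure (Set.mem_range_self k))
  have hbig : Tendsto (fun k => φ (ψ k)) atTop atTop :=
    hφ.tendsto_atTop.comp hψ.tendsto_atTop
  have hex : IsExchangeable (γ : Measure (ℕ → Ed d)) := by
    intro σ hσ
    obtain ⟨M, hM⟩ := hσ.bddAbove
    have hc : Continuous fun (x : ℕ → Ed d) n => x (σ n) := by fun_prop
    have l1 := ((ProbabilityMeasure.continuous_map hc).tendsto γ).comp hlim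
    have l2 := l1.congr' (f₂ := ν ∘ ψ) (by
      filter_upwards [hbig.eventually_gt_atTop M] with k hk
      apply Subtype.ext
      refine h1 (ψ k) σ fun n hn => ?_
      by_contra hne
      have : n ≤ M := hM hne
      omega)
    exact congrArg ProbabilityMeasure.toMeasure (tendsto_nhds_unique l2 hlim)
  have hmar : HasMarginal (γ : Measure (ℕ → Ed d)) μ := by
    intro n
    have hc : Continuous fun (x : ℕ → Ed d) => x n := by fun_prop
    have l1 := ((ProbabilityMeasure.continuous_map hc).tendsto γ).comp hlim
    have l2 := l1.congr' (f₂ := fun _ => (⟨μ, inferInstance⟩ : ProbabilityMeasure (Ed d))) (by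
      filter_upwards [hbig.eventually_gt_atTop n] with k hk
      apply Subtype.ext
      exact h2 (ψ k) n hk)
    exact congrArg ProbabilityMeasure.toMeasure (tendsto_nhds_unique l2 tendsto_const_nhds)
  have hcost : Cinf c (γ : Measure (ℕ → Ed d)) ≤ a := by
    have hl : LowerSemicontinuous fun x : ℕ → Ed d => c (x 0) (x 1) :=
      LowerSemicontinuous.comp (f := fun p : Ed d × Ed d => c p.1 p.2)
        (g := fun x : ℕ → Ed d => (x 0, x 1)) hlsc (by fun_prop)
    refine (aux_lsc (μs := fun k => (ν (ψ k) : Measure (ℕ → Ed d))) hl fun G hG =>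
      ProbabilityMeasure.le_liminf_measure_open_of_tendsto hlim hG).trans ?_
    refine (liminf_le_liminf (Eventually.of_forall fun k => h4 (ψ k))).trans ?_
    simp
  exact (iInf_le_of_le (γ : Measure (ℕ → Ed d)) <| iInf_le_of_le γ.2 <|
    iInf_le_of_le hex <| iInf_le_of_le hmar le_rfl).trans hcost

/-- Theorem 1.2, lower semi-continuous case: for a symmetric Borel lower
semi-continuous cost `c : ℝ^d × ℝ^d → [0,∞]`, if some exchangeable probability
measure with marginal `μ` has finite cost, then `F_N^OT[μ] → F_∞^OT[μ]`. -/
theorem N_body_cost_approaches_infinite_body_cost_lsc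
    {d : ℕ} (c : Ed d → Ed d → ℝ≥0∞)
    (hmeas : Measurable fun p : Ed d × Ed d => c p.1 p.2)
    (hsymm : ∀ x y, c x y = c y x)
    (hlsc : LowerSemicontinuous fun p : Ed d × Ed d => c p.1 p.2)
    (μ : Measure (Ed d)) [IsProbabilityMeasure μ]
    (hex : ∃ γ₀ : Measure (ℕ → Ed d), IsProbabilityMeasure γ₀ ∧ IsExchangeable γ₀ ∧
      HasMarginal γ₀ μ ∧ Cinf c γ₀ < ⊤) :
    Tendsto (fun N : ℕ => FNOT N c μ) atTop (𝓝 (FinfOT c μ)) := by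
  refine tendsto_order.2 ⟨fun b hb => ?_, fun b hb => ?_⟩
  · obtain ⟨a, hba, ha⟩ := exists_between hb
    by_contra hcon
    refine absurd (aux_ge hmeas hlsc μ (a := a) ?_) (not_le.2 ha)
    refine (not_eventually.1 hcon).mono fun N hN => lt_of_le_of_lt (not_lt.1 hN) hba
  · filter_upwards [eventually_ge_atTop 2] with N hN
    exact (aux_le hmeas μ hN).trans_lt hb
end
end

section
/- Let c : ℝ^d × ℝ^d → [0,∞] be Borel measurable, symmetric, and lower semi-continuous, and let μ be a Borel probability measure on ℝ^d. Then there exists γ^opt ∈ P_sym^∞(ℝ^d) with γ^opt ↦ μ such that C_∞[γ^opt] = F_∞^OT[μ], and there exists an infinitely representable symmetric probability measure μ₂^opt on ℝ^d × ℝ^d with both marginals μ such that ∫ c dμ₂^opt = F_∞^OT[μ]. -/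
open MeasureTheory ENNReal Filter Topology ProbabilityTheory

noncomputable section

/-- `μ₂` is infinitely representable: it is the two-coordinate marginal of an
exchangeable probability measure on `(ℝ^d)^ℕ`. -/
def InfRep {d : ℕ} (μ₂ : Measure (Ed d × Ed d)) : Prop :=
  ∃ γ : Measure (ℕ → Ed d), IsProbabilityMeasure γ ∧ IsExchangeable γ ∧
    ∀ i j : ℕ, i ≠ j → γ.map (fun x => (x i, x j)) = μ₂

lemma lintegral_layer {Ω : Type*} [MeasurableSpace Ω] (ν : Measure Ω) [SFinite ν]
    (f : Ω → ℝ≥0∞) (hf : Measurable f) :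
    ∫⁻ x, f x ∂ν = ∫⁻ t in Set.Ioi (0 : ℝ), ν {x | ENNReal.ofReal t < f x} := by
  have hS : MeasurableSet {p : Ω × ℝ | ENNReal.ofReal p.2 < f p.1} :=
    measurableSet_lt (by fun_prop) (by fun_prop)
  have h1 : ∀ x, f x = ∫⁻ t in Set.Ioi (0 : ℝ),
      {p : Ω × ℝ | ENNReal.ofReal p.2 < f p.1}.indicator (fun _ => (1 : ℝ≥0∞)) (x, t) := by
    intro x
    have h2 : ∀ t : ℝ, {p : Ω × ℝ | ENNReal.ofReal p.2 < f p.1}.indicator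
        (fun _ => (1 : ℝ≥0∞)) (x, t)
        = {t : ℝ | ENNReal.ofReal t < f x}.indicator (fun _ => (1 : ℝ≥0∞)) t := fun t => rfl
    have hm : MeasurableSet {t : ℝ | ENNReal.ofReal t < f x} :=
      measurableSet_lt (by fun_prop) (by fun_prop)
    simp_rw [h2]
    rw [lintegral_indicator hm, setLIntegral_one, Measure.restrict_apply hm]
    by_cases htop : f x = ∞
    · have : {t : ℝ | ENNReal.ofReal t < f x} = Set.univ := by ext t; simp [htop]
      rw [this]; simp [htop]
    · have : {t : ℝ | ENNReal.ofReal t < f x} ∩ Set.Ioi 0 = Set.Ioo 0 (f x).toReal := by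
        ext t
        simp only [Set.mem_inter_iff, Set.mem_ofPred_eq, Set.mem_Ioi, Set.mem_Ioo]
        constructor
        · rintro ⟨h, h0⟩
          exact ⟨h0, (ENNReal.ofReal_lt_iff_lt_toReal h0.le htop).1 h⟩
        · rintro ⟨h0, h⟩
          exact ⟨(ENNReal.ofReal_lt_iff_lt_toReal h0.le htop).2 h, h0⟩
      rw [this]; simp [htop]
  calc ∫⁻ x, f x ∂ν = ∫⁻ x, (∫⁻ t in Set.Ioi (0 : ℝ),
      {p : Ω × ℝ | ENNReal.ofReal p.2 < f p.1}.indicator (fun _ => (1 : ℝ≥0∞)) (x, t)) ∂ν :=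
        lintegral_congr h1
    _ = _ := by
      rw [lintegral_lintegral_swap]
      · refine lintegral_congr fun t => ?_
        have hm : MeasurableSet {x | ENNReal.ofReal t < f x} :=
          measurableSet_lt (by fun_prop) (by fun_prop)
        rw [← lintegral_indicator_one hm]
        rfl
      · exact (measurable_const.indicator hS).aemeasurable

lemma lsc_lintegral {Ω : Type*} [MeasurableSpace Ω] [TopologicalSpace Ω] [BorelSpace Ω]
    [TopologicalSpace.PseudoMetrizableSpace Ω] [TopologicalSpace.SeparableSpace Ω]
    (f : Ω → ℝ≥0∞) (hf : LowerSemicontinuous f) :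
    LowerSemicontinuous fun ν : ProbabilityMeasure Ω => ∫⁻ x, f x ∂(ν : Measure Ω) := by
  letI := TopologicalSpace.pseudoMetrizableSpacePseudoMetric Ω
  rw [lowerSemicontinuous_iff_le_liminf]
  intro ν
  simp_rw [lintegral_layer _ f hf.measurable]
  refine le_trans (lintegral_mono fun t => ?_) (lintegral_liminf_le' fun i => ?_)
  · exact ProbabilityMeasure.le_liminf_measure_open_of_tendsto tendsto_id
      (hf.isOpen_preimage _)
  · refine Antitone.measurable (fun s t hst => measure_mono fun x hx => ?_) |>.aemeasurable
    exact lt_of_le_of_lt (ENNReal.ofReal_le_ofReal hst) hx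

lemma tight_marginal {d : ℕ} (μ : Measure (Ed d)) [IsProbabilityMeasure μ] :
    IsTightMeasureSet {γ : Measure (ℕ → Ed d) | HasMarginal γ μ} := by
  rw [isTightMeasureSet_iff_exists_isCompact_measure_compl_le]
  intro ε hε
  obtain ⟨δ, hδ, hsum⟩ := ENNReal.exists_pos_sum_of_countable' hε.ne' ℕ
  have ht : IsTightMeasureSet {μ} := isTightMeasureSet_singleton
  rw [isTightMeasureSet_iff_exists_isCompact_measure_compl_le] at ht
  choose K hK hKμ using fun n => ht (δ n) (hδ n)
  refine ⟨Set.univ.pi K, isCompact_univ_pi hK, fun γ hγ => ?_⟩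
  have hsub : (Set.univ.pi K)ᶜ ⊆ ⋃ n, (fun x : ℕ → Ed d => x n) ⁻¹' (K n)ᶜ := by
    intro x hx
    simpa [Set.mem_pi] using hx
  calc γ (Set.univ.pi K)ᶜ ≤ ∑' n, γ ((fun x : ℕ → Ed d => x n) ⁻¹' (K n)ᶜ) :=
        (measure_mono hsub).trans (measure_iUnion_le _)
    _ ≤ ∑' n, δ n := by
        refine ENNReal.tsum_le_tsum fun n => ?_
        rw [← Measure.map_apply (measurable_pi_apply n) (hK n).measurableSet.compl, hγ n]
        exact hKμ n μ rfl
    _ ≤ ε := hsum.le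

def admSet {d : ℕ} (μ : Measure (Ed d)) : Set (ProbabilityMeasure (ℕ → Ed d)) :=
  {γ | IsExchangeable (γ : Measure (ℕ → Ed d)) ∧ HasMarginal (γ : Measure (ℕ → Ed d)) μ}

lemma admSet_closed {d : ℕ} (μ : Measure (Ed d)) [IsProbabilityMeasure μ] :
    IsClosed (admSet μ) := by
  have hc : ∀ σ : Equiv.Perm ℕ, Continuous (fun (x : ℕ → Ed d) n => x (σ n)) :=
    fun σ => by fun_prop
  have hp : ∀ n : ℕ, Continuous (fun (x : ℕ → Ed d) => x n) := fun n => by fun_prop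
  have : admSet μ = (⋂ σ : Equiv.Perm ℕ, ⋂ _ : {n : ℕ | σ n ≠ n}.Finite,
      {γ : ProbabilityMeasure (ℕ → Ed d) | γ.map (hc σ).measurable.aemeasurable = γ}) ∩
      ⋂ n : ℕ, {γ : ProbabilityMeasure (ℕ → Ed d) |
        γ.map (hp n).measurable.aemeasurable = (⟨μ, inferInstance⟩ : ProbabilityMeasure (Ed d))} := by
    ext γ
    simp only [admSet, IsExchangeable, HasMarginal, Set.mem_inter_iff, Set.mem_iInter,
      Set.mem_ofPred_eq]
    refine and_congr (forall_congr' fun σ => forall_congr' fun _ => ?_)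
      (forall_congr' fun n => ?_)
    · exact ⟨fun h => Subtype.ext h, fun h => congrArg Subtype.val h⟩
    · exact ⟨fun h => Subtype.ext h, fun h => congrArg Subtype.val h⟩
  rw [this]
  refine IsClosed.inter (isClosed_iInter fun σ => isClosed_iInter fun _ => ?_)
    (isClosed_iInter fun n => ?_)
  · exact isClosed_eq (ProbabilityMeasure.continuous_map (hc σ)) continuous_id
  · exact isClosed_eq (ProbabilityMeasure.continuous_map (hp n)) continuous_const

lemma admSet_compact {d : ℕ} (μ : Measure (Ed d)) [IsProbabilityMeasure μ] :
    IsCompact (admSet μ) := by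
  rw [← (admSet_closed μ).closure_eq]
  apply isCompact_closure_of_isTightMeasureSet
  refine (tight_marginal μ).subset ?_
  rintro _ ⟨γ, hγ, rfl⟩
  exact hγ.2

lemma admSet_nonempty {d : ℕ} (μ : Measure (Ed d)) [IsProbabilityMeasure μ] :
    (admSet μ).Nonempty := by
  refine ⟨⟨Measure.infinitePi fun _ : ℕ => μ, inferInstance⟩, fun σ _ => ?_, fun n => ?_⟩
  · exact Measure.map_infinitePi_infinitePi_of_inj (P := fun _ : ℕ => μ) σ.injective
  · exact Measure.infinitePi_map_eval (fun _ : ℕ => μ) n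

lemma exists_perm_pair (i j : ℕ) (hij : i ≠ j) :
    ∃ σ : Equiv.Perm ℕ, {n : ℕ | σ n ≠ n}.Finite ∧ σ 0 = i ∧ σ 1 = j := by
  refine ⟨Equiv.swap (Equiv.swap 0 i 1) j * Equiv.swap 0 i, ?_, ?_, ?_⟩
  · refine (Set.toFinite ({0, i, 1, j} : Set ℕ)).subset fun n hn => ?_
    by_contra h
    simp only [Set.mem_insert_iff, Set.mem_singleton_iff, not_or] at h
    apply hn
    have h1 : n ≠ Equiv.swap 0 i 1 := by
      rw [Equiv.swap_apply_def]; split_ifs <;> tauto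
    rw [Equiv.Perm.mul_apply, Equiv.swap_apply_of_ne_of_ne h.1 h.2.1,
      Equiv.swap_apply_of_ne_of_ne h1 h.2.2.2]
  · rw [Equiv.Perm.mul_apply, Equiv.swap_apply_left, Equiv.swap_apply_of_ne_of_ne _ hij]
    intro h
    have := (Equiv.swap 0 i).injective ((Equiv.swap_apply_left 0 i).trans h)
    omega
  · rw [Equiv.Perm.mul_apply, Equiv.swap_apply_left]

lemma map_pair {d : ℕ} (γ : Measure (ℕ → Ed d)) (hγ : IsExchangeable γ) (i j : ℕ) (hij : i ≠ j) :
    γ.map (fun x => (x i, x j)) = γ.map (fun x => (x 0, x 1)) := by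
  obtain ⟨σ, hσ, h0, h1⟩ := exists_perm_pair i j hij
  conv_rhs => rw [← hγ σ hσ]
  rw [Measure.map_map (by fun_prop) (by fun_prop)]
  simp [Function.comp_def, h0, h1]

/-- Theorem 2.8 (existence of minimizers of the infinite-body OT problem): for a
symmetric, Borel measurable, lower semi-continuous cost there is a minimizer
`γ^opt` of the infinite-body problem, and a minimizing infinitely representable
pair measure `μ₂^opt`. -/
theorem infinite_body_OT_minimizer_exists
    {d : ℕ} (c : Ed d → Ed d → ℝ≥0∞)
    (hmeas : Measurable fun p : Ed d × Ed d => c p.1 p.2)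
    (hsymm : ∀ x y, c x y = c y x)
    (hlsc : LowerSemicontinuous fun p : Ed d × Ed d => c p.1 p.2)
    (μ : Measure (Ed d)) [IsProbabilityMeasure μ] :
    (∃ γ : Measure (ℕ → Ed d), IsProbabilityMeasure γ ∧ IsExchangeable γ ∧
      HasMarginal γ μ ∧ Cinf c γ = FinfOT c μ) ∧
    (∃ μ₂ : Measure (Ed d × Ed d), IsProbabilityMeasure μ₂ ∧
      μ₂.map Prod.swap = μ₂ ∧ μ₂.map Prod.fst = μ ∧ μ₂.map Prod.snd = μ ∧
      InfRep μ₂ ∧ ∫⁻ p, c p.1 p.2 ∂μ₂ = FinfOT c μ) := by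
  have hlsc' : LowerSemicontinuous fun x : ℕ → Ed d => c (x 0) (x 1) :=
    hlsc.comp (g := fun x : ℕ → Ed d => (x 0, x 1)) (by fun_prop)
  obtain ⟨γ, ⟨hex, hmarg⟩, hmin⟩ := LowerSemicontinuousOn.exists_isMinOn (admSet_nonempty μ)
    (admSet_compact μ) ((lsc_lintegral _ hlsc').lowerSemicontinuousOn _)
  have hopt : Cinf c (γ : Measure (ℕ → Ed d)) = FinfOT c μ := by
    apply le_antisymm
    · refine le_iInf fun γ' => le_iInf fun hP => le_iInf fun hE => le_iInf fun hM => ?_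
      exact isMinOn_iff.1 hmin ⟨γ', hP⟩ ⟨hE, hM⟩
    · exact iInf_le_of_le (γ : Measure (ℕ → Ed d)) (iInf_le_of_le inferInstance
        (iInf_le_of_le hex (iInf_le_of_le hmarg le_rfl)))
  refine ⟨⟨γ, inferInstance, hex, hmarg, hopt⟩,
    (γ : Measure (ℕ → Ed d)).map (fun x => (x 0, x 1)), ?_, ?_, ?_, ?_, ?_, ?_⟩
  · exact Measure.isProbabilityMeasure_map (by fun_prop)
  · rw [Measure.map_map (by fun_prop) (by fun_prop)]
    exact map_pair _ hex 1 0 (by norm_num)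
  · rw [Measure.map_map (by fun_prop) (by fun_prop)]
    exact hmarg 0
  · rw [Measure.map_map (by fun_prop) (by fun_prop)]
    exact hmarg 1
  · exact ⟨γ, inferInstance, hex, map_pair _ hex⟩
  · rw [lintegral_map hmeas (by fun_prop), ← hopt]
    rfl
end
end

section
/- Let N ≥ 2 be an integer and let ρ ∈ L¹(ℝ³) be nonnegative with ∫_{ℝ³} ρ = N, and assume ∫∫ ρ(x)ρ(y)/|x−y| dx dy < ∞ (e.g. ρ ∈ L¹ ∩ L³). Then lim_{k→∞} V_ee^{SCE,k}[ρ] = (1/2)(1 − 1/N) ∫∫_{ℝ³×ℝ³} ρ(x)ρ(y)/|x−y| dx dy. -/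
open MeasureTheory ENNReal Filter Topology ProbabilityTheory

noncomputable section

/-- `μ₂` is `N`-representable: it is the two-coordinate marginal of a symmetric
probability measure on `(ℝ^d)^N`. -/
def NRep {d : ℕ} (N : ℕ) (μ₂ : Measure (Ed d × Ed d)) : Prop :=
  ∃ γ : Measure (Fin N → Ed d), IsProbabilityMeasure γ ∧ IsSymmetricN γ ∧
    ∀ i j : Fin N, i ≠ j → γ.map (fun x => (x i, x j)) = μ₂

/-- The reduced SCE functional `V_ee^{SCE,k}[ρ]`: `binom(N,2)` times the infimum of
the Coulomb pair energy over symmetric `k`-representable pair measures whose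
marginals have Lebesgue density `ρ/N`. -/
def VSCEk (N k : ℕ) (ρ : Ed 3 → ℝ) : ℝ≥0∞ :=
  (N.choose 2 : ℝ≥0∞) *
    ⨅ (μ₂ : Measure (Ed 3 × Ed 3)) (_ : IsProbabilityMeasure μ₂)
      (_ : μ₂.map Prod.swap = μ₂)
      (_ : μ₂.map Prod.fst = volume.withDensity fun y => ENNReal.ofReal (ρ y / N))
      (_ : μ₂.map Prod.snd = volume.withDensity fun y => ENNReal.ofReal (ρ y / N))
      (_ : NRep k μ₂),
      ∫⁻ p, coulomb p.1 p.2 ∂μ₂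

/-- Gaussian kernel. -/
def Gk (t : ℝ) (x y : Ed 3) : ℝ≥0∞ := ENNReal.ofReal (Real.exp (-(t ^ 2 * dist x y ^ 2)))

/-- Half-width Gaussian. -/
def Fk (t : ℝ) (z x : Ed 3) : ℝ≥0∞ := ENNReal.ofReal (Real.exp (-(2 * t ^ 2 * dist x z ^ 2)))

lemma Gk_meas : Measurable (fun p : ℝ × Ed 3 × Ed 3 => Gk p.1 p.2.1 p.2.2) := by
  unfold Gk
  apply Measurable.ennreal_ofReal
  apply Continuous.measurable
  fun_prop

lemma Fk_meas (t : ℝ) : Measurable (fun p : Ed 3 × Ed 3 => Fk t p.1 p.2) := by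
  unfold Fk
  apply Measurable.ennreal_ofReal
  apply Continuous.measurable
  fun_prop

lemma Gk_meas_t (t : ℝ) : Measurable (fun p : Ed 3 × Ed 3 => Gk t p.1 p.2) :=
  Gk_meas.comp (measurable_const.prodMk measurable_id)

lemma Gk_self (t : ℝ) (x : Ed 3) : Gk t x x = 1 := by simp [Gk]

lemma Fk_le_one (t : ℝ) (z x : Ed 3) : Fk t z x ≤ 1 := by
  unfold Fk
  rw [ENNReal.ofReal_le_one, Real.exp_le_one_iff]
  have := mul_nonneg (sq_nonneg t) (sq_nonneg (dist x z))
  nlinarith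

lemma gauss_rep (t : ℝ) (ht : 0 < t) : ∃ C : ℝ≥0∞, C ≠ 0 ∧ C ≠ ⊤ ∧
    ∀ x y, ∫⁻ z, Fk t z x * Fk t z y = C * Gk t x y := by
  have hint : Integrable (fun z : Ed 3 => Real.exp (-(4 * t ^ 2) * ‖z‖ ^ 2)) := by
    by_contra h
    have h1 := integral_undef h
    rw [GaussianFourier.integral_rexp_neg_mul_sq_norm (V := Ed 3) (by positivity)] at h1
    have : 0 < (Real.pi / (4 * t ^ 2)) ^ ((Module.finrank ℝ (Ed 3) : ℝ) / 2) := by positivity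
    exact this.ne' h1
  refine ⟨∫⁻ z : Ed 3, ENNReal.ofReal (Real.exp (-(4 * t ^ 2) * ‖z‖ ^ 2)), ?_, ?_, ?_⟩
  · rw [← ofReal_integral_eq_lintegral_ofReal hint (ae_of_all _ fun _ => by positivity),
      GaussianFourier.integral_rexp_neg_mul_sq_norm (V := Ed 3) (by positivity)]
    simp only [ne_eq, ENNReal.ofReal_eq_zero, not_le]
    positivity
  · rw [← ofReal_integral_eq_lintegral_ofReal hint (ae_of_all _ fun _ => by positivity)]
    exact ENNReal.ofReal_ne_top
  · intro x y
    have hp : ∀ z : Ed 3, Fk t z x * Fk t z y =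
        ENNReal.ofReal (Real.exp (-(4 * t ^ 2) * ‖z - (2:ℝ)⁻¹ • (x + y)‖ ^ 2)) * Gk t x y := by
      intro z
      unfold Fk Gk
      rw [← ENNReal.ofReal_mul (by positivity), ← ENNReal.ofReal_mul (by positivity),
        ← Real.exp_add, ← Real.exp_add]
      congr 2
      have e1 := parallelogram_law_with_norm ℝ (x - z) (y - z)
      have e2 : x - z + (y - z) = (-2 : ℝ) • (z - (2:ℝ)⁻¹ • (x + y)) := by module
      have e3 : x - z - (y - z) = x - y := by abel
      rw [e2, e3, norm_smul] at e1
      simp only [dist_eq_norm]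
      rw [Real.norm_eq_abs, abs_neg, abs_of_pos (by norm_num : (0:ℝ) < 2)] at e1
      linear_combination (t^2) * e1
    simp_rw [hp]
    rw [lintegral_mul_const' _ _ (by simp [Gk])]
    rw [lintegral_sub_right_eq_self (fun z : Ed 3 => ENNReal.ofReal (Real.exp (-(4 * t ^ 2) * ‖z‖ ^ 2)))]

lemma coulomb_rep (x y : Ed 3) :
    coulomb x y = ENNReal.ofReal (2 / √Real.pi) * ∫⁻ t in Set.Ioi (0:ℝ), Gk t x y := by
  rcases eq_or_ne x y with rfl | h
  · simp only [coulomb, Gk_self]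
    simp
    rw [ENNReal.mul_top]
    simp; positivity
  · have hd : 0 < dist x y := dist_pos.mpr h
    have hb : 0 < dist x y ^ 2 := by positivity
    have hi := (integrable_exp_neg_mul_sq hb).integrableOn (s := Set.Ioi 0)
    have e : ∀ t, Gk t x y = ENNReal.ofReal (Real.exp (-dist x y ^ 2 * t ^ 2)) := by
      intro t; unfold Gk; congr 2; ring
    simp_rw [e]
    rw [← ofReal_integral_eq_lintegral_ofReal hi (ae_of_all _ fun _ => by positivity),
      integral_gaussian_Ioi, coulomb, ← ENNReal.ofReal_mul (by positivity),
      ← ENNReal.ofReal_inv_of_pos hd]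
    congr 1
    rw [Real.sqrt_div Real.pi_pos.le, Real.sqrt_sq hd.le]
    have : 0 < √Real.pi := by positivity
    field_simp

attribute [irreducible] Fk Gk

lemma sq_lint_le {Ω : Type*} [MeasurableSpace Ω] (γ : Measure Ω) [IsProbabilityMeasure γ]
    (f : Ω → ℝ≥0∞) (hf : Measurable f) (hfin : ∫⁻ w, f w ∂γ ≠ ⊤) :
    (∫⁻ w, f w ∂γ) * (∫⁻ w, f w ∂γ) ≤ ∫⁻ w, f w * f w ∂γ := by
  set a := ∫⁻ w, f w ∂γ with ha
  have h1 : ∫⁻ w, 2 * a * f w ∂γ ≤ ∫⁻ w, (a * a + f w * f w) ∂γ := by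
    apply lintegral_mono
    intro w
    dsimp only
    rcases eq_or_ne (f w) ⊤ with h | h
    · simp [h]
    · rw [← ENNReal.toReal_le_toReal (by finiteness) (by finiteness)]
      rw [ENNReal.toReal_add (by finiteness) (by finiteness)]
      simp only [ENNReal.toReal_mul, ENNReal.toReal_ofNat]
      nlinarith [sq_nonneg (a.toReal - (f w).toReal)]
  rw [lintegral_const_mul _ hf, lintegral_add_left measurable_const, lintegral_const, ← ha,
    measure_univ, mul_one, mul_assoc, two_mul] at h1
  exact (ENNReal.add_le_add_iff_left (by finiteness)).mp h1

lemma swap_rep (t : ℝ) (C : ℝ≥0∞) (hCt : C ≠ ⊤)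
    (hC : ∀ x y, ∫⁻ z, Fk t z x * Fk t z y = C * Gk t x y)
    {Ω : Type*} [MeasurableSpace Ω] (η : Measure Ω) [SFinite η] (X Y : Ω → Ed 3)
    (hX : Measurable X) (hY : Measurable Y) :
    C * ∫⁻ w, Gk t (X w) (Y w) ∂η = ∫⁻ z, ∫⁻ w, Fk t z (X w) * Fk t z (Y w) ∂η := by
  have hF := Fk_meas t
  have hm : Measurable (fun p : Ω × Ed 3 => Fk t p.2 (X p.1) * Fk t p.2 (Y p.1)) := by
    have h1 : Measurable (fun p : Ω × Ed 3 => Fk t p.2 (X p.1)) :=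
      hF.comp (measurable_snd.prodMk (hX.comp measurable_fst))
    have h2 : Measurable (fun p : Ω × Ed 3 => Fk t p.2 (Y p.1)) :=
      hF.comp (measurable_snd.prodMk (hY.comp measurable_fst))
    exact h1.mul h2
  rw [← lintegral_const_mul' _ _ hCt]
  simp_rw [← hC]
  rw [lintegral_lintegral_swap]
  exact hm.aemeasurable

lemma posdef {k : ℕ} (t : ℝ) (ht : 0 < t) (μ : Measure (Ed 3)) [IsProbabilityMeasure μ]
    (γ : Measure (Fin k → Ed 3)) [IsProbabilityMeasure γ]
    (hm : ∀ i, γ.map (fun x => x i) = μ) :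
    (k:ℝ≥0∞) * k * ∫⁻ p, Gk t p.1 p.2 ∂(μ.prod μ) ≤
      ∑ i, ∑ j, ∫⁻ w, Gk t (w i) (w j) ∂γ := by
  obtain ⟨C, hC0, hCt, hC⟩ := gauss_rep t ht
  rw [← ENNReal.mul_le_mul_iff_right hC0 hCt]
  have hF := Fk_meas t
  have hFz : ∀ z, Measurable (fun x => Fk t z x) := fun z => hF.comp measurable_prodMk_left
  have hFi : ∀ z (i : Fin k), Measurable (fun w : Fin k → Ed 3 => Fk t z (w i)) :=
    fun z i => (hFz z).comp (measurable_pi_apply i)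
  have hmi : ∀ z i, ∫⁻ w, Fk t z (w i) ∂γ = ∫⁻ x, Fk t z x ∂μ := by
    intro z i
    rw [← hm i, lintegral_map (hFz z) (measurable_pi_apply i)]
  have L : C * ((k:ℝ≥0∞) * k * ∫⁻ p, Gk t p.1 p.2 ∂(μ.prod μ)) =
      ∫⁻ z, (k * ∫⁻ x, Fk t z x ∂μ) * (k * ∫⁻ x, Fk t z x ∂μ) := by
    rw [mul_left_comm, swap_rep t C hCt hC (μ.prod μ) Prod.fst Prod.snd measurable_fst
      measurable_snd, ← lintegral_const_mul' _ _ (by finiteness)]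
    congr with z
    rw [lintegral_prod_mul (hFz z).aemeasurable (hFz z).aemeasurable]
    ring
  have R : C * ∑ i, ∑ j, ∫⁻ w, Gk t (w i) (w j) ∂γ =
      ∫⁻ z, ∫⁻ w, (∑ i, Fk t z (w i)) * (∑ i, Fk t z (w i)) ∂γ := by
    simp_rw [Finset.sum_mul_sum]
    have hm2 : ∀ i j : Fin k, Measurable (fun q : Ed 3 × (Fin k → Ed 3) =>
        Fk t q.1 (q.2 i) * Fk t q.1 (q.2 j)) := fun i j =>
      (hF.comp (measurable_fst.prodMk ((measurable_pi_apply i).comp measurable_snd))).mul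
        (hF.comp (measurable_fst.prodMk ((measurable_pi_apply j).comp measurable_snd)))
    have hm3 : ∀ i j : Fin k, Measurable (fun z : Ed 3 => ∫⁻ w, Fk t z (w i) * Fk t z (w j) ∂γ) :=
      fun i j => (hm2 i j).lintegral_prod_right'
    have e : ∀ z, ∫⁻ w, ∑ i, ∑ j, Fk t z (w i) * Fk t z (w j) ∂γ =
        ∑ i, ∑ j, ∫⁻ w, Fk t z (w i) * Fk t z (w j) ∂γ := by
      intro z
      rw [lintegral_finsetSum]
      · congr with i
        rw [lintegral_finsetSum]
        intro j _; exact (hFi z i).mul (hFi z j)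
      · intro i _; exact Finset.measurable_sum _ fun j _ => (hFi z i).mul (hFi z j)
    simp_rw [e]
    rw [lintegral_finsetSum _ (fun i _ => Finset.measurable_sum _ fun j _ => hm3 i j),
      Finset.mul_sum]
    congr with i
    rw [lintegral_finsetSum _ (fun j _ => hm3 i j), Finset.mul_sum]
    congr with j
    exact swap_rep t C hCt hC γ _ _ (measurable_pi_apply i) (measurable_pi_apply j)
  rw [L, R]
  apply lintegral_mono
  intro z
  dsimp only
  have hs : ∫⁻ w, ∑ i, Fk t z (w i) ∂γ = k * ∫⁻ x, Fk t z x ∂μ := by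
    rw [lintegral_finsetSum _ (fun i _ => hFi z i)]
    simp [hmi]
  rw [← hs]
  apply sq_lint_le
  · exact Finset.measurable_sum _ fun i _ => hFi z i
  · rw [hs]
    have : ∫⁻ x, Fk t z x ∂μ ≤ 1 := (lintegral_mono (Fk_le_one t z)).trans (by simp)
    exact ENNReal.mul_ne_top (by finiteness) (ne_top_of_le_ne_top (by simp) this)

/-- pointwise-in-t lower bound -/
lemma lower_t {k : ℕ} (t : ℝ) (ht : 0 < t) (μ : Measure (Ed 3)) [IsProbabilityMeasure μ]
    (μ₂ : Measure (Ed 3 × Ed 3)) (hfst : μ₂.map Prod.fst = μ) (h : NRep (k+2) μ₂) :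
    ((k : ℝ≥0∞) + 1) * ∫⁻ p, Gk t p.1 p.2 ∂(μ.prod μ) ≤
      ((k : ℝ≥0∞) + 1) * (∫⁻ p, Gk t p.1 p.2 ∂μ₂) + 1 := by
  obtain ⟨γ, hγ, -, hij⟩ := h
  have hm : ∀ i, γ.map (fun x => x i) = μ := by
    intro i
    obtain ⟨j, hj⟩ := exists_ne i
    rw [← hfst, ← hij i j hj.symm, Measure.map_map measurable_fst (by fun_prop)]
    rfl
  have hp := posdef t ht μ γ hm
  have hd : ∀ i j : Fin (k+2), ∫⁻ w, Gk t (w i) (w j) ∂γ =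
      if i = j then 1 else ∫⁻ p, Gk t p.1 p.2 ∂μ₂ := by
    intro i j
    split_ifs with hh
    · subst hh; simp [Gk_self]
    · rw [← hij i j hh, lintegral_map (Gk_meas_t t) (by fun_prop)]
  simp_rw [hd] at hp
  set A := ∫⁻ p, Gk t p.1 p.2 ∂μ₂
  set B := ∫⁻ p, Gk t p.1 p.2 ∂(μ.prod μ)
  have hs : ∀ i : Fin (k+2), ∑ j, (if i = j then 1 else A) = ((k:ℝ≥0∞)+1) * A + 1 := by
    intro i
    rw [← Finset.add_sum_erase _ _ (Finset.mem_univ i), if_pos rfl, add_comm,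
      Finset.sum_congr rfl (g := fun _ => A)]
    · simp
    · intro j hj
      rw [if_neg (Finset.ne_of_mem_erase hj).symm]
  simp_rw [hs] at hp
  rw [Finset.sum_const, Finset.card_univ, Fintype.card_fin, nsmul_eq_mul, mul_assoc,
    ENNReal.mul_le_mul_iff_right (by simp) (by finiteness)] at hp
  refine le_trans ?_ hp
  gcongr
  push_cast
  gcongr
  norm_num

/-- truncated mean field energy -/
def Jn (μ : Measure (Ed 3)) (n : ℕ) : ℝ≥0∞ :=
  ENNReal.ofReal (2 / √Real.pi) * ∫⁻ t in Set.Ioc (0:ℝ) n, ∫⁻ p, Gk t p.1 p.2 ∂(μ.prod μ)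

lemma coul_int (η : Measure (Ed 3 × Ed 3)) [SFinite η] :
    ∫⁻ p, coulomb p.1 p.2 ∂η =
      ENNReal.ofReal (2 / √Real.pi) * ∫⁻ t in Set.Ioi (0:ℝ), ∫⁻ p, Gk t p.1 p.2 ∂η := by
  simp_rw [coulomb_rep]
  rw [lintegral_const_mul' _ _ (by finiteness), lintegral_lintegral_swap]
  apply Measurable.aemeasurable
  exact Gk_meas.comp measurable_swap

lemma Jn_sup (μ : Measure (Ed 3)) [IsProbabilityMeasure μ] :
    ⨆ n, Jn μ n = ∫⁻ p, coulomb p.1 p.2 ∂(μ.prod μ) := by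
  unfold Jn
  rw [coul_int, ← ENNReal.mul_iSup]
  congr 1
  rw [← setLIntegral_iUnion_of_directed]
  · congr 2
    ext x
    simp only [Set.mem_iUnion, Set.mem_Ioc, Set.mem_Ioi]
    exact ⟨fun ⟨_, h⟩ => h.1, fun h => (exists_nat_ge x).imp fun n hn => ⟨h, hn⟩⟩
  · apply Monotone.directed_le
    intro a b hab
    exact Set.Ioc_subset_Ioc le_rfl (by exact_mod_cast hab)

lemma lower_n {k : ℕ} (n : ℕ) (μ : Measure (Ed 3)) [IsProbabilityMeasure μ]
    (μ₂ : Measure (Ed 3 × Ed 3)) [IsProbabilityMeasure μ₂]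
    (hfst : μ₂.map Prod.fst = μ) (h : NRep (k+2) μ₂) :
    Jn μ n ≤ (∫⁻ p, coulomb p.1 p.2 ∂μ₂) +
      ENNReal.ofReal (2 / √Real.pi) * n * ((k : ℝ≥0∞) + 1)⁻¹ := by
  have h0 : (k : ℝ≥0∞) + 1 ≠ 0 := by simp
  have h1 : (k : ℝ≥0∞) + 1 ≠ ⊤ := by finiteness
  have hg : Measurable fun t => ∫⁻ p, Gk t p.1 p.2 ∂μ₂ := Gk_meas.lintegral_prod_right'
  have ht : ∀ t : ℝ, 0 < t → ∫⁻ p, Gk t p.1 p.2 ∂(μ.prod μ) ≤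
      (∫⁻ p, Gk t p.1 p.2 ∂μ₂) + ((k : ℝ≥0∞) + 1)⁻¹ := by
    intro t ht
    rw [← ENNReal.mul_le_mul_iff_right h0 h1, mul_add, ENNReal.mul_inv_cancel h0 h1]
    exact lower_t t ht μ μ₂ hfst h
  have : ∫⁻ t in Set.Ioc (0:ℝ) n, ∫⁻ p, Gk t p.1 p.2 ∂(μ.prod μ) ≤
      (∫⁻ t in Set.Ioi (0:ℝ), ∫⁻ p, Gk t p.1 p.2 ∂μ₂) + n * ((k : ℝ≥0∞) + 1)⁻¹ := by
    calc _ ≤ ∫⁻ t in Set.Ioc (0:ℝ) n, ((∫⁻ p, Gk t p.1 p.2 ∂μ₂) + ((k : ℝ≥0∞) + 1)⁻¹) :=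
          setLIntegral_mono (hg.add_const _) fun t h => ht t h.1
      _ = (∫⁻ t in Set.Ioc (0:ℝ) n, (∫⁻ p, Gk t p.1 p.2 ∂μ₂)) + n * ((k : ℝ≥0∞) + 1)⁻¹ := by
          rw [lintegral_add_left hg]
          simp [mul_comm]
      _ ≤ _ := by
          gcongr
          exact Set.Ioc_subset_Ioi_self
  unfold Jn
  rw [coul_int, mul_assoc, ← mul_add]
  gcongr

lemma prod_NRep (k : ℕ) (μ : Measure (Ed 3)) [IsProbabilityMeasure μ] :
    NRep k (μ.prod μ) := by
  refine ⟨Measure.infinitePi (fun _ : Fin k => μ), inferInstance, ?_, ?_⟩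
  · intro σ
    exact Measure.map_infinitePi_infinitePi_of_inj (P := fun _ : Fin k => μ) σ.injective
  · intro i j hij
    exact Measure.infinitePi_map_eval_prod (P := fun _ : Fin k => μ) hij

/-- Corollary 3.6: for an `N`-electron density `ρ` of finite Coulomb energy,
`V_ee^{SCE,k}[ρ] → (1/2)(1 - 1/N) ∫∫ ρ(x)ρ(y)/|x-y| dx dy` as `k → ∞`. -/
theorem VSCEk_tendsto_self_interaction_corrected_mean_field
    (N : ℕ) (hN : 2 ≤ N) (ρ : Ed 3 → ℝ) (hnonneg : ∀ y, 0 ≤ ρ y)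
    (hL1 : Integrable ρ) (hmass : ∫ y, ρ y = (N : ℝ))
    (hfin : ∫⁻ x, ∫⁻ y, ENNReal.ofReal (ρ x) * ENNReal.ofReal (ρ y) * coulomb x y < ⊤) :
    Tendsto (fun k : ℕ => VSCEk N k ρ) atTop
      (𝓝 (ENNReal.ofReal ((1 - 1 / (N : ℝ)) / 2) *
        ∫⁻ x, ∫⁻ y, ENNReal.ofReal (ρ x) * ENNReal.ofReal (ρ y) * coulomb x y)) := by
  have hNpos : (0:ℝ) < N := by positivity
  set μ : Measure (Ed 3) := volume.withDensity fun y => ENNReal.ofReal (ρ y / N) with hμ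
  have hmeas : AEMeasurable (fun y => ENNReal.ofReal (ρ y / N)) (volume : Measure (Ed 3)) :=
    (hL1.aestronglyMeasurable.aemeasurable.div_const _).ennreal_ofReal
  have hprob : IsProbabilityMeasure μ := by
    constructor
    rw [hμ, withDensity_apply _ MeasurableSet.univ, Measure.restrict_univ,
      ← ofReal_integral_eq_lintegral_ofReal (hL1.div_const _)
        (ae_of_all _ fun y => div_nonneg (hnonneg y) hNpos.le),
      integral_div, hmass, div_self hNpos.ne', ENNReal.ofReal_one]
  set I : ℕ → ℝ≥0∞ := fun k => ⨅ (μ₂ : Measure (Ed 3 × Ed 3)) (_ : IsProbabilityMeasure μ₂)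
      (_ : μ₂.map Prod.swap = μ₂)
      (_ : μ₂.map Prod.fst = μ)
      (_ : μ₂.map Prod.snd = μ)
      (_ : NRep k μ₂),
      ∫⁻ p, coulomb p.1 p.2 ∂μ₂ with hI
  set J := ∫⁻ p, coulomb p.1 p.2 ∂(μ.prod μ) with hJ
  have hup : ∀ k, I k ≤ J := by
    intro k
    refine iInf_le_of_le (μ.prod μ) (iInf_le_of_le inferInstance (iInf_le_of_le
      Measure.prod_swap (iInf_le_of_le ?_ (iInf_le_of_le ?_ (iInf_le_of_le (prod_NRep k μ) le_rfl)))))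
    · simp [Measure.map_fst_prod]
    · simp [Measure.map_snd_prod]
  have hlow : ∀ k n, Jn μ n ≤ I (k + 2) + ENNReal.ofReal (2 / √Real.pi) * n * ((k : ℝ≥0∞) + 1)⁻¹ := by
    intro k n
    rw [hI]
    simp only [ENNReal.iInf_add]
    refine le_iInf fun μ₂ => le_iInf fun h1 => le_iInf fun h2 => le_iInf fun h3 => le_iInf fun h4 =>
      le_iInf fun h5 => lower_n n μ μ₂ h3 h5
  have hlim : Tendsto I atTop (𝓝 J) := by
    rw [← tendsto_add_atTop_iff_nat 2]
    refine tendsto_order.2 ⟨fun a ha => ?_, fun a ha => Eventually.of_forall fun k =>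
      (hup _).trans_lt ha⟩
    rw [hJ, ← Jn_sup, lt_iSup_iff] at ha
    obtain ⟨n, hn⟩ := ha
    have hc : Tendsto (fun k : ℕ => a + ENNReal.ofReal (2 / √Real.pi) * n * ((k : ℝ≥0∞) + 1)⁻¹)
        atTop (𝓝 (a + ENNReal.ofReal (2 / √Real.pi) * n * 0)) := by
      refine tendsto_const_nhds.add (ENNReal.Tendsto.const_mul ?_ (Or.inr (by finiteness)))
      have := (tendsto_add_atTop_iff_nat 1).2 ENNReal.tendsto_inv_nat_nhds_zero
      simpa using this
    rw [mul_zero, add_zero] at hc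
    filter_upwards [hc.eventually (gt_mem_nhds hn)] with k hk
    by_contra! hcon
    exact absurd ((hlow k n).trans (by gcongr)) (not_le.2 hk)
  have hV : (fun k => VSCEk N k ρ) = fun k => (N.choose 2 : ℝ≥0∞) * I k := rfl
  rw [hV]
  have hcm : Measurable (fun p : Ed 3 × Ed 3 => coulomb p.1 p.2) := by
    unfold coulomb
    exact ((measurable_fst.dist measurable_snd).ennreal_ofReal).inv
  have hJ2 : J = ENNReal.ofReal (1 / N) * ENNReal.ofReal (1 / N) *
      ∫⁻ x, ∫⁻ y, ENNReal.ofReal (ρ x) * ENNReal.ofReal (ρ y) * coulomb x y := by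
    rw [hJ, lintegral_prod _ hcm.aemeasurable, ← lintegral_const_mul' _ _ (by finiteness), hμ,
      lintegral_withDensity_eq_lintegral_mul₀ hmeas]
    · congr with x
      rw [← lintegral_const_mul' _ _ (by finiteness), Pi.mul_apply,
        lintegral_withDensity_eq_lintegral_mul₀ hmeas, ← lintegral_const_mul' _ _ (by finiteness)]
      · congr with y
        simp only [Pi.mul_apply]
        rw [div_eq_mul_one_div, div_eq_mul_one_div (ρ y), ENNReal.ofReal_mul (hnonneg x),
          ENNReal.ofReal_mul (hnonneg y)]
        ring
      · exact (hcm.comp measurable_prodMk_left).aemeasurable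
    · exact hcm.lintegral_prod_right'.aemeasurable
  have hconst : ENNReal.ofReal ((1 - 1 / (N : ℝ)) / 2) =
      (N.choose 2 : ℝ≥0∞) * (ENNReal.ofReal (1 / N) * ENNReal.ofReal (1 / N)) := by
    rw [← ENNReal.ofReal_natCast, ← ENNReal.ofReal_mul (by positivity),
      ← ENNReal.ofReal_mul (by positivity), Nat.cast_choose_two]
    congr 1
    field_simp
  rw [hconst, mul_assoc, ← hJ2]
  exact ENNReal.Tendsto.const_mul hlim (Or.inr (by finiteness))
end
end
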